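/- arXiv:1803.02017 — 3 statements merged into one kernel-verified Lean document; each statement's English description precedes it below -/
import Mathlib

section
/- Let I = I(D) be the edge ideal of a vertex-weighted digraph D with vertices x_1,…,x_n and weight d_i at x_i. If U is the digraph obtained from D by assigning weight 2 to every vertex x_i with d_i ≥ 2 (and leaving weights 1 unchanged), then I(D) is Cohen–Macaulay if and only if I(U) is Cohen–Macaulay. -/
/-!
The dimension of `R / I(D)` depends only on which primes contain `I(D)`, hence not on the weights.
It remains to see that the depth does not change when the weight of one vertex varies in `d ≥ 2`.

Let `φ` be the flat substitution `x_j ↦ x_j ^ a`. The powers `1, x_j, …, x_j ^ (a - 1)` form a basis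
of `R` over itself along `φ`, and with respect to it a monomial quotient `R / I_A` with exponent set
`A` splits as the direct sum of the `R / I_{A_r}`, `r < a`, where
`A_r = {e | (the vector e with e_j replaced by r + a e_j) ∈ A}`. By the adjunction between extension
and restriction of scalars on `Ext`, and because the grade of an ideal depends only on its radical,
`depth R / I_A` is the minimum of the numbers `depth R / I_{A_r}`.

If `A` is itself stretched, that is, it was obtained from `B` by replacing `e_j` with `⌊e_j / b⌋`,
then for `a = b` every summand is `R / I_B`. So `B` and its stretching have the same depth, and for
any other `a` the depth of `R / I_B` is at most that of each summand: it does not drop when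
`t = e_j` is replaced by `⌊(r + a t) / b⌋`, for any `r < a` and `b > 0`. Suitable `a`, `b`, `r`
turn the weight `d ≥ 2` into `d + 1`, and back.
-/

open MvPolynomial CategoryTheory Opposite

noncomputable section

/-- The polynomial ring `K[x_v : v ∈ σ]` over the field `K`. -/
abbrev MvPoly (K : Type) [Field K] (σ : Type) : Type := MvPolynomial σ K

variable (K : Type) [Field K] (σ : Type)

/-- The graded maximal ideal `m = (x_v : v ∈ σ)` generated by all the variables. -/
def maxIdeal : Ideal (MvPoly K σ) := Ideal.span (Set.range MvPolynomial.X)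

/-- The depth of `R/I` with respect to the graded maximal ideal, defined as
`inf { i | Ext^i(R/m, R/I) ≠ 0 }` (with value `⊤` for the zero module). -/
def depthQ (I : Ideal (MvPoly K σ)) : ℕ∞ :=
  sInf { d : ℕ∞ | ∃ i : ℕ, d = i ∧
    Nontrivial (((Ext (MvPoly K σ) (ModuleCat (MvPoly K σ)) i).obj
      (op (ModuleCat.of (MvPoly K σ) (MvPoly K σ ⧸ maxIdeal K σ)))).obj
      (ModuleCat.of (MvPoly K σ) (MvPoly K σ ⧸ I))) }

/-- `R/I` is Cohen–Macaulay: its depth equals its Krull dimension. -/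
def IsCMQ (I : Ideal (MvPoly K σ)) : Prop :=
  ((depthQ K σ I : ℕ∞) : WithBot ℕ∞) = ringKrullDim (MvPoly K σ ⧸ I)

variable {n : ℕ}

/-- The monomial `x^a`. -/
def mono (K : Type) [Field K] {n : ℕ} (a : Fin n →₀ ℕ) : MvPoly K (Fin n) :=
  MvPolynomial.monomial a 1

/-- A monomial ideal: an ideal generated by monomials. -/
def IsMonomialIdeal (I : Ideal (MvPoly K (Fin n))) : Prop :=
  ∃ S : Set (Fin n →₀ ℕ), I = Ideal.span (mono K '' S)

/-- A squarefree exponent vector. -/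
def SqfreeExp (a : Fin n →₀ ℕ) : Prop := ∀ i, a i ≤ 1

/-- A squarefree monomial ideal: an ideal generated by squarefree monomials. -/
def IsSqfreeMonomialIdeal (I : Ideal (MvPoly K (Fin n))) : Prop :=
  ∃ S : Set (Fin n →₀ ℕ), (∀ a ∈ S, SqfreeExp a) ∧ I = Ideal.span (mono K '' S)

/-- A vertex-weighted digraph on the vertex set `Fin n`: edges are ordered pairs of
distinct vertices, and each vertex `x_i` has a weight `wt i ≥ 1`. -/
structure VWDigraph (n : ℕ) where
  adj : Fin n → Fin n → Prop
  loopless : ∀ i, ¬ adj i i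
  wt : Fin n → ℕ
  wt_pos : ∀ i, 1 ≤ wt i

/-- The edge ideal of a vertex-weighted digraph:
`I(D) = (x_i x_j^{d_j} : (x_i, x_j) ∈ E(D))`. -/
def VWDigraph.edgeIdeal (K : Type) [Field K] {n : ℕ} (D : VWDigraph n) :
    Ideal (MvPoly K (Fin n)) :=
  Ideal.span { p | ∃ i j, D.adj i j ∧ p = MvPolynomial.X i * MvPolynomial.X j ^ D.wt j }

end

section AdjunctionExt

open Abelian Limits

universe w w' v v' u u'

variable {C : Type u} [Category.{v} C] [Abelian C] [HasExt.{w} C]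
  {D : Type u'} [Category.{v'} D] [Abelian D] [HasExt.{w'} D]
  {L : C ⥤ D} {F : D ⥤ C} [F.Additive] [PreservesFiniteLimits F] [PreservesFiniteColimits F]

/-- The map `Ext^n(L X, Y) → Ext^n(X, F Y)` induced by an adjunction `L ⊣ F` with `F` exact: apply
`F`, then precompose with the unit. In degree `0` it is `adj.homEquiv`. -/
noncomputable def extHomOfAdj (adj : L ⊣ F) (X : C) (Y : D) (n : ℕ) :
    Ext (L.obj X) Y n →+ Ext X (F.obj Y) n :=
  ((Ext.mk₀ (adj.unit.app X)).precomp (F.obj Y) (zero_add n)).comp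
    (F.mapExtAddHom (L.obj X) Y n)

theorem extHomOfAdj_mk₀ (adj : L ⊣ F) {X : C} {Y : D} (f : L.obj X ⟶ Y) :
    extHomOfAdj adj X Y 0 (Ext.mk₀ f) = Ext.mk₀ (adj.homEquiv X Y f) := by
  simp [extHomOfAdj, Adjunction.homEquiv_unit, Ext.mapExactFunctor_mk₀]

theorem extHomOfAdj_comp (adj : L ⊣ F) {X : C} {Y Z : D} {i j n : ℕ} (x : Ext (L.obj X) Y i)
    (y : Ext Y Z j) (h : i + j = n) :
    extHomOfAdj adj X Z n (x.comp y h) =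
      (extHomOfAdj adj X Y i x).comp (y.mapExactFunctor F) h := by
  change (Ext.mk₀ _).comp ((x.comp y h).mapExactFunctor F) (zero_add n) = _
  rw [Ext.mapExactFunctor_comp]
  exact (Ext.comp_assoc _ _ _ (zero_add i) h (by omega)).symm

theorem extHomOfAdj_bijective (adj : L ⊣ F) [EnoughInjectives D] [F.PreservesInjectiveObjects]
    (X : C) (Y : D) (n : ℕ) : Function.Bijective (extHomOfAdj adj X Y n) := by
  induction n generalizing Y with
  | zero =>
    refine (Function.Bijective.of_comp_iff _ (Ext.mk₀_bijective _ _)).1 ?_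
    have h : ⇑(extHomOfAdj adj X Y 0) ∘ Ext.mk₀ = Ext.mk₀ ∘ adj.homEquiv X Y :=
      funext (extHomOfAdj_mk₀ adj)
    rw [h]
    exact (Ext.mk₀_bijective _ _).comp (adj.homEquiv X Y).bijective
  | succ n ih =>
    let S := ShortComplex.mk _ _ (cokernel.condition (Injective.ι Y))
    have hS : S.ShortExact := { exact := S.exact_of_g_is_cokernel (cokernelIsCokernel _) }
    have : Injective S.X₂ := inferInstanceAs (Injective (Injective.under Y))
    have : Injective (S.map F).X₂ := F.injective_obj S.X₂
    have hSF := hS.map_of_exact F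
    constructor
    · refine (injective_iff_map_eq_zero _).2 fun x hx => ?_
      obtain ⟨y, rfl⟩ := Ext.covariant_sequence_exact₁ _ hS x (Ext.eq_zero_of_injective _) rfl
      rw [extHomOfAdj_comp, Ext.mapExactFunctor_extClass] at hx
      obtain ⟨z, hz⟩ := Ext.covariant_sequence_exact₃ _ hSF _ rfl hx
      obtain ⟨z, rfl⟩ := (ih S.X₂).2 z
      have hy : z.comp (Ext.mk₀ S.g) (add_zero n) = y := (ih S.X₃).1 (by
        rw [extHomOfAdj_comp, Ext.mapExactFunctor_mk₀]; exact hz)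
      rw [← hy, Ext.comp_assoc_of_second_deg_zero, hS.comp_extClass, Ext.comp_zero]
    · intro x
      obtain ⟨y, rfl⟩ := Ext.covariant_sequence_exact₁ _ hSF x (Ext.eq_zero_of_injective _) rfl
      obtain ⟨y, rfl⟩ := (ih S.X₃).2 y
      exact ⟨y.comp hS.extClass rfl, by
        rw [extHomOfAdj_comp, Ext.mapExactFunctor_extClass]; rfl⟩

end AdjunctionExt

section ExtOfProjectiveResolution

open Abelian Limits

universe w v u

variable {C : Type u} [Category.{v} C] [Abelian C] {X : C} (P : ProjectiveResolution X) (Y : C)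

theorem subsingleton_hom_iff_of_projectiveResolution :
    Subsingleton (X ⟶ Y) ↔ ∀ f : P.complex.X 0 ⟶ Y, P.complex.d 1 0 ≫ f = 0 → f = 0 := by
  change Subsingleton (((ChainComplex.single₀ C).obj X).X 0 ⟶ Y) ↔ _
  constructor
  · intro h f hf
    rw [← P.exact₀.g_desc f hf, h.elim (P.exact₀.desc f hf) 0]
    exact comp_zero
  · intro h
    refine subsingleton_of_forall_eq 0 fun f => ?_
    rw [← cancel_epi (P.π.f 0), comp_zero]
    exact h _ (by rw [← Category.assoc, P.complex_d_comp_π_f_zero, zero_comp])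

theorem subsingleton_ext_succ_iff_of_projectiveResolution [HasExt.{w} C] (n : ℕ) :
    Subsingleton (Ext X Y (n + 1)) ↔ ∀ f : P.complex.X (n + 1) ⟶ Y,
      P.complex.d (n + 2) (n + 1) ≫ f = 0 → ∃ g : P.complex.X n ⟶ Y,
        P.complex.d (n + 1) n ≫ g = f := by
  constructor
  · exact fun h f hf =>
      (P.extMk_eq_zero_iff f (n + 2) rfl hf n rfl).1 (Subsingleton.elim _ _)
  · refine fun h => subsingleton_of_forall_eq 0 fun x => ?_
    obtain ⟨f, hf, rfl⟩ := P.extMk_surjective x (n + 2) rfl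
    exact (P.extMk_eq_zero_iff f (n + 2) rfl hf n rfl).2 (h f hf)

-- `_root_.Ext` is defined by projective resolutions, `Abelian.Ext` in the derived category.
theorem subsingleton_linearYoneda_ext_iff (R : Type*) [Ring R] [Linear R C] [EnoughProjectives C]
    [HasExt.{w} C] (X Y : C) (n : ℕ) :
    Subsingleton (((_root_.Ext R C n).obj (op X)).obj Y) ↔ Subsingleton (Ext X Y n) := by
  let P := projectiveResolution X
  rw [← ModuleCat.isZero_iff_subsingleton, (P.isoExt n Y).isZero_iff,
    ← HomologicalComplex.exactAt_iff_isZero_homology]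
  cases n with
  | zero =>
    rw [HomologicalComplex.exactAt_iff' _ 0 0 1 (by simp) (by simp),
      ShortComplex.moduleCat_exact_iff, Ext.homEquiv₀.subsingleton_congr,
      subsingleton_hom_iff_of_projectiveResolution P]
    -- the differential of the `Hom` complex from degree `0` to itself is zero
    refine forall₂_congr fun f _ => ⟨fun ⟨(g : P.complex.X 0 ⟶ Y), hg⟩ => ?_, fun hf => ⟨0, ?_⟩⟩
    · have hd : P.complex.d 0 0 ≫ g = f := hg
      rw [← hd, P.complex.shape 0 0 (by simp), zero_comp]
    · rw [map_zero, hf]; rfl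
  | succ n =>
    rw [HomologicalComplex.exactAt_iff' _ n (n + 1) (n + 2) (by simp) (by simp),
      ShortComplex.moduleCat_exact_iff, subsingleton_ext_succ_iff_of_projectiveResolution P]
    rfl

end ExtOfProjectiveResolution

section SubsingletonExt

open Abelian Limits

universe w v u

variable {C : Type u} [Category.{v} C] [Abelian C] [HasExt.{w} C]

theorem subsingleton_ext_congr {X X' Y Y' : C} (e : X ≅ X') (e' : Y ≅ Y') (n : ℕ) :
    Subsingleton (Ext X Y n) ↔ Subsingleton (Ext X' Y' n) :=
  (((extFunctor n).mapIso e.symm.op).app Y ≪≫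
    (extFunctorObj X' n).mapIso e').addCommGroupIsoToAddEquiv.subsingleton_congr

theorem subsingleton_ext_biproduct_iff {ι : Type} [Finite ι] (X : C) (Y : ι → C) [HasBiproduct Y]
    (n : ℕ) :
    Subsingleton (Ext X (⨁ Y) n) ↔ ∀ r, Subsingleton (Ext X (Y r) n) := by
  constructor
  · refine fun h r => subsingleton_of_forall_eq 0 fun x => ?_
    classical
    rw [← Ext.comp_mk₀_id x, ← biproduct.ι_π_self Y r, ← Ext.mk₀_comp_mk₀,
      ← Ext.comp_assoc_of_second_deg_zero, h.elim (x.comp _ _) 0, Ext.zero_comp]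
  · refine fun h => subsingleton_of_forall_eq 0 fun x => ?_
    have := Fintype.ofFinite ι
    rw [← Ext.comp_mk₀_id x, ← biproduct.total, Ext.mk₀_sum, Ext.comp_sum]
    refine Finset.sum_eq_zero fun r _ => ?_
    rw [← Ext.mk₀_comp_mk₀, ← Ext.comp_assoc_of_second_deg_zero,
      (h r).elim (x.comp _ _) 0, Ext.zero_comp]

end SubsingletonExt

section Grade

open Abelian

universe u

variable {R : Type u} [CommRing R] {M N : Type u} [AddCommGroup M] [Module R M]
  [AddCommGroup N] [Module R N]

/-- The grade of the ideal `I` on the module `M`: the least `i` with `Ext^i(R/I, M) ≠ 0`, and `⊤` if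
there is none. -/
noncomputable def idealGrade (I : Ideal R) (M : Type u) [AddCommGroup M] [Module R M] : ℕ∞ :=
  ⨅ (i : ℕ) (_ : Nontrivial (Ext (ModuleCat.of R (R ⧸ I)) (ModuleCat.of R M) i)), (i : ℕ∞)

theorem natCast_le_idealGrade_iff {I : Ideal R} {k : ℕ} :
    k ≤ idealGrade I M ↔
      ∀ i < k, Subsingleton (Ext (ModuleCat.of R (R ⧸ I)) (ModuleCat.of R M) i) := by
  simp only [idealGrade, le_iInf_iff, Nat.cast_le, ← not_subsingleton_iff_nontrivial]
  exact forall_congr' fun i => not_imp_comm.trans (by rw [not_le])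

theorem idealGrade_congr (I : Ideal R) (e : M ≃ₗ[R] N) : idealGrade I M = idealGrade I N :=
  ENat.eq_of_forall_natCast_le_iff fun k => by
    simp only [natCast_le_idealGrade_iff, subsingleton_ext_congr (Iso.refl _) e.toModuleIso]

theorem idealGrade_pi {ι : Type} [Finite ι] (I : Ideal R) (M : ι → Type u)
    [∀ r, AddCommGroup (M r)] [∀ r, Module R (M r)] :
    idealGrade I (Π r, M r) = ⨅ r, idealGrade I (M r) :=
  ENat.eq_of_forall_natCast_le_iff fun k => by
    simp only [le_iInf_iff, natCast_le_idealGrade_iff, subsingleton_ext_congr (Iso.refl _)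
      (ModuleCat.biproductIsoPi fun r => ModuleCat.of R (M r)).symm,
      subsingleton_ext_biproduct_iff]
    exact ⟨fun h r i hi => h i hi r, fun h i hi r => h r i hi⟩

theorem idealGrade_eq_of_radical_eq [IsNoetherianRing R] [Module.Finite R M] {I J : Ideal R}
    (hIJ : I.radical = J.radical) (hI : I • (⊤ : Submodule R M) < ⊤) :
    idealGrade I M = idealGrade J M := by
  have hI_top : I ≠ ⊤ := fun h => hI.ne (by rw [h, Submodule.top_smul])
  refine ENat.eq_of_forall_natCast_le_iff fun k => ?_
  -- Rees: if `Ext^i(N, M) = 0` for all `i < k` and one finite `N` with support `V(I)`, then also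
  -- for every finite `N` supported in `V(I)`.
  have rees := (ModuleCat.exists_isRegular_tfae I k (ModuleCat.of R M) hI).out 2 0
  have le_grade_iff {I' : Ideal R} (hI' : I.radical = I'.radical) : k ≤ idealGrade I' M ↔
      ∃ N : ModuleCat.{u} R, Nontrivial N ∧ Module.Finite R N ∧
        Module.support R N = PrimeSpectrum.zeroLocus I ∧
        ∀ i < k, Subsingleton (Ext N (ModuleCat.of R M) i) := by
    have : Nontrivial (R ⧸ I') := Ideal.Quotient.nontrivial_iff.2 fun h =>
      hI_top (by rwa [← Ideal.radical_eq_top, hI', Ideal.radical_eq_top])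
    have hsupp : Module.support R (R ⧸ I') = PrimeSpectrum.zeroLocus I := by
      rw [Module.support_eq_zeroLocus, Ideal.annihilator_quotient,
        ← PrimeSpectrum.zeroLocus_radical, ← hI', PrimeSpectrum.zeroLocus_radical]
    rw [natCast_le_idealGrade_iff]
    exact ⟨fun h => ⟨ModuleCat.of R (R ⧸ I'), inferInstance, inferInstance, hsupp, h⟩,
      fun h => rees.1 h (ModuleCat.of R (R ⧸ I')) inferInstance inferInstance
        hsupp.subset⟩
  exact (le_grade_iff rfl).trans (le_grade_iff hIJ).symm

theorem idealGrade_restrictScalars {S : Type u} [CommRing S] {ψ : R →+* S} (hψ : ψ.Flat)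
    (I : Ideal R) (N : ModuleCat.{u} S) :
    idealGrade I ((ModuleCat.restrictScalars ψ).obj N) = idealGrade (I.map ψ) N := by
  have := ModuleCat.preservesFiniteLimits_extendScalars_of_flat hψ
  let adj := ModuleCat.extendRestrictScalarsAdj ψ
  have := Functor.preservesInjectiveObjects_of_adjunction_of_preservesMonomorphisms adj
  algebraize [ψ]
  let e : (ModuleCat.extendScalars ψ).obj (ModuleCat.of R (R ⧸ I)) ≅
      ModuleCat.of S (S ⧸ I.map ψ) :=
    (Algebra.TensorProduct.quotIdealMapEquivTensorQuot S I).symm.toLinearEquiv.toModuleIso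
  refine ENat.eq_of_forall_natCast_le_iff fun k => ?_
  simp only [natCast_le_idealGrade_iff]
  refine forall₂_congr fun i _ => ?_
  rw [← subsingleton_ext_congr e (Iso.refl _)]
  exact (Equiv.ofBijective _ (extHomOfAdj_bijective adj _ _ i)).symm.subsingleton_congr

theorem idealGrade_map_eq_iInf {S : Type u} [CommRing S] {ψ : R →+* S} {ι : Type} [Finite ι]
    {s : (ι → R) →ₛₗ[ψ] S} (hs : Function.Bijective s) {J : Ideal S} {I : ι → Ideal R}
    (hsJ : ∀ q, s q ∈ J ↔ ∀ r, q r ∈ I r) (𝔞 : Ideal R) :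
    idealGrade (𝔞.map ψ) (S ⧸ J) = ⨅ r, idealGrade 𝔞 (R ⧸ I r) := by
  classical
  have := Fintype.ofFinite ι
  let : Algebra R S := ψ.toAlgebra
  let sR : (ι → R) →ₗ[R] S := { s with map_smul' := s.map_smulₛₗ }
  let e : (ι → R) ≃ₗ[R] S := LinearEquiv.ofBijective sR hs
  have hflat : ψ.Flat := Module.Flat.of_linearEquiv e.symm
  have hJ : (Submodule.pi Set.univ I).map (e : (ι → R) →ₗ[R] S) = J.restrictScalars R := by
    rw [Submodule.map_equiv_eq_comap_symm]
    ext x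
    obtain ⟨q, rfl⟩ := e.surjective x
    simp only [Submodule.mem_comap, LinearEquiv.coe_coe, e.symm_apply_apply, Submodule.mem_pi,
      Set.mem_univ, true_imp_iff]
    exact (hsJ q).symm
  let e' : (Π r, R ⧸ I r) ≃ₗ[R] S ⧸ J.restrictScalars R :=
    (Submodule.quotientPi I).symm.trans (Submodule.Quotient.equiv _ _ e hJ)
  rw [← idealGrade_pi, idealGrade_congr 𝔞 e']
  exact (idealGrade_restrictScalars hflat 𝔞 (ModuleCat.of S (S ⧸ J))).symm

end Grade

section Stretch

variable {σ : Type*} {K : Type*} [CommRing K]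

/-- The exponent vector `e` with its `j`-th coordinate `e j` replaced by `φ (e j)`. -/
noncomputable def modifyExp (j : σ) (φ : ℕ → ℕ) (e : σ →₀ ℕ) : σ →₀ ℕ := e.update j (φ (e j))

@[simp]
theorem modifyExp_self (j : σ) (φ : ℕ → ℕ) (e : σ →₀ ℕ) : modifyExp j φ e j = φ (e j) := by
  classical rw [modifyExp, Finsupp.update_apply, if_pos rfl]

@[simp]
theorem modifyExp_of_ne {i j : σ} (h : i ≠ j) (φ : ℕ → ℕ) (e : σ →₀ ℕ) :
    modifyExp j φ e i = e i := by
  classical rw [modifyExp, Finsupp.update_apply, if_neg h]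

theorem modifyExp_comp (j : σ) (φ χ : ℕ → ℕ) :
    modifyExp j φ ∘ modifyExp j χ = modifyExp j (φ ∘ χ) := by
  ext e i
  rcases eq_or_ne i j with rfl | hi <;> simp [*]

theorem modifyExp_id (j : σ) : modifyExp j id = id := by
  ext e i
  rcases eq_or_ne i j with rfl | hi <;> simp [*]

theorem modifyExp_mono (j : σ) {φ : ℕ → ℕ} (hφ : Monotone φ) : Monotone (modifyExp j φ) := by
  intro d e h i
  rcases eq_or_ne i j with rfl | hi
  · simpa using hφ (h i)
  · simpa [hi] using h i

theorem modifyExp_zero (j : σ) {φ : ℕ → ℕ} (hφ : φ 0 = 0) : modifyExp j φ 0 = 0 := by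
  ext i
  rcases eq_or_ne i j with rfl | hi <;> simp [*]

theorem monotone_add_mul (r a : ℕ) : Monotone fun t : ℕ => r + a * t :=
  fun _ _ h => by dsimp only; gcongr

theorem modifyExp_add_mul_inj (j : σ) {a r r' : ℕ} (hr : r < a) (hr' : r' < a) {e e' : σ →₀ ℕ} :
    modifyExp j (r + a * ·) e = modifyExp j (r' + a * ·) e' ↔ r = r' ∧ e = e' := by
  refine ⟨fun h => ?_, by rintro ⟨rfl, rfl⟩; rfl⟩
  have hj : r + a * e j = r' + a * e' j := by simpa using DFunLike.congr_fun h j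
  have hr_eq : r = r' := by
    simpa [Nat.mod_eq_of_lt hr, Nat.mod_eq_of_lt hr'] using congrArg (· % a) hj
  refine ⟨hr_eq, Finsupp.ext fun i => ?_⟩
  rcases eq_or_ne i j with rfl | hi
  · subst hr_eq
    exact Nat.eq_of_mul_eq_mul_left (by omega) (Nat.add_left_cancel hj)
  · simpa [hi] using DFunLike.congr_fun h i

theorem modifyExp_mod_add_mul_div (j : σ) (a : ℕ) (e : σ →₀ ℕ) :
    modifyExp j (e j % a + a * ·) (modifyExp j (· / a) e) = e := by
  ext i
  rcases eq_or_ne i j with rfl | hi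
  · simp [Nat.mod_add_div]
  · simp [hi]

open Classical in
/-- The substitution `x_j ↦ x_j ^ a` on polynomials, fixing the other variables. -/
noncomputable def stretch (K : Type*) [CommRing K] (j : σ) (a : ℕ) :
    MvPolynomial σ K →ₐ[K] MvPolynomial σ K :=
  aeval (Function.update X j (X j ^ a))

theorem X_pow_mul_stretch_monomial (j : σ) (a r : ℕ) (e : σ →₀ ℕ) (c : K) :
    X j ^ r * stretch K j a (monomial e c) = monomial (modifyExp j (r + a * ·) e) c := by
  classical
  have hprod : (e.prod fun i k => Function.update X j (X j ^ a) i ^ k) =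
      (monomial (modifyExp j (a * ·) e) 1 : MvPolynomial σ K) := by
    have hsupp : (modifyExp j (a * ·) e).support ⊆ e.support := fun i => by
      rcases eq_or_ne i j with rfl | hi <;> simp +contextual [*]
    rw [monomial_eq, C_1, one_mul, Finsupp.prod_of_support_subset _ hsupp _ (by simp)]
    refine Finset.prod_congr rfl fun i _ => ?_
    rcases eq_or_ne i j with rfl | hi <;> simp [pow_mul, *]
  have hexp : Finsupp.single j r + modifyExp j (a * ·) e = modifyExp j (r + a * ·) e := by
    ext i
    rcases eq_or_ne i j with rfl | hi
    · simp
    · simp [hi]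
  rw [stretch, aeval_monomial, hprod, X_pow_eq_monomial, algebraMap_eq, C_mul_monomial,
    monomial_mul, hexp, mul_one, one_mul]

theorem coeff_X_pow_mul_stretch (j : σ) {a r r' : ℕ} (hr : r < a) (hr' : r' < a)
    (e : σ →₀ ℕ) (p : MvPolynomial σ K) :
    coeff (modifyExp j (r + a * ·) e) (X j ^ r' * stretch K j a p) =
      if r = r' then coeff e p else 0 := by
  classical
  induction p using MvPolynomial.induction_on' with
  | monomial d c =>
    rw [X_pow_mul_stretch_monomial, coeff_monomial, coeff_monomial]
    simp only [eq_comm (a := modifyExp j (r' + a * ·) d), modifyExp_add_mul_inj j hr hr']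
    grind
  | add p q hp hq =>
    rw [map_add, mul_add, coeff_add, hp, hq]
    split_ifs <;> simp

/-- The map `(q_r)_{r < a} ↦ ∑ r, x_j ^ r * q_r(…, x_j ^ a, …)`, semilinear along `stretch K j a`;
it presents the polynomial ring as a free module over itself along this substitution. -/
noncomputable def interleave (K : Type*) [CommRing K] (j : σ) (a : ℕ) :
    (Fin a → MvPolynomial σ K) →ₛₗ[(stretch K j a : MvPolynomial σ K →+* MvPolynomial σ K)]
      MvPolynomial σ K where
  toFun q := ∑ r : Fin a, X j ^ (r : ℕ) * stretch K j a (q r)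
  map_add' p q := by simp [mul_add, Finset.sum_add_distrib]
  map_smul' c q := by
    simp only [Pi.smul_apply, smul_eq_mul, map_mul, Finset.mul_sum, RingHom.coe_coe]
    exact Finset.sum_congr rfl fun r _ => by ring

theorem interleave_apply (j : σ) (a : ℕ) (q : Fin a → MvPolynomial σ K) :
    interleave K j a q = ∑ r : Fin a, X j ^ (r : ℕ) * stretch K j a (q r) := rfl

theorem coeff_interleave (j : σ) {a : ℕ} (q : Fin a → MvPolynomial σ K) (r : Fin a)
    (e : σ →₀ ℕ) :
    coeff (modifyExp j (r + a * ·) e) (interleave K j a q) = coeff e (q r) := by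
  simp [interleave_apply, coeff_sum, coeff_X_pow_mul_stretch, Fin.val_inj]

theorem interleave_bijective (j : σ) {a : ℕ} (ha : 0 < a) :
    Function.Bijective (interleave K j a) := by
  constructor
  · intro p q h
    ext r e
    rw [← coeff_interleave, h, coeff_interleave]
  · intro p
    induction p using MvPolynomial.induction_on' with
    | monomial d c =>
      refine ⟨Pi.single ⟨d j % a, Nat.mod_lt _ ha⟩ (monomial (modifyExp j (· / a) d) c), ?_⟩
      rw [interleave_apply, Finset.sum_eq_single ⟨d j % a, Nat.mod_lt _ ha⟩
        (fun r _ hr => by simp [hr]) (by simp)]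
      simp [X_pow_mul_stretch_monomial, modifyExp_mod_add_mul_div]
    | add p q hp hq =>
      obtain ⟨p, rfl⟩ := hp
      obtain ⟨q, rfl⟩ := hq
      exact ⟨p + q, map_add _ _ _⟩

theorem mem_restrictSupportIdeal_iff {A : Set (σ →₀ ℕ)} (hA : IsUpperSet A)
    {p : MvPolynomial σ K} :
    p ∈ restrictSupportIdeal K A hA ↔ ∀ e, coeff e p ≠ 0 → e ∈ A :=
  forall_congr' fun _ => imp_congr_left mem_support_iff

theorem interleave_mem_restrictSupportIdeal_iff (j : σ) {a : ℕ} (ha : 0 < a)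
    {A : Set (σ →₀ ℕ)} (hA : IsUpperSet A) (q : Fin a → MvPolynomial σ K) :
    interleave K j a q ∈ restrictSupportIdeal K A hA ↔ ∀ r : Fin a,
      q r ∈ restrictSupportIdeal K (modifyExp j (r + a * ·) ⁻¹' A)
        (hA.preimage (modifyExp_mono j (monotone_add_mul r a))) := by
  simp only [mem_restrictSupportIdeal_iff]
  constructor
  · exact fun h r e he => h _ (by rwa [coeff_interleave])
  · intro h e he
    rw [← modifyExp_mod_add_mul_div j a e] at he ⊢
    exact h ⟨e j % a, Nat.mod_lt _ ha⟩ _ (by rwa [← coeff_interleave])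

theorem radical_map_stretch_idealOfVars (j : σ) {a : ℕ} (ha : 0 < a) :
    ((idealOfVars σ K).map (stretch K j a)).radical = (idealOfVars σ K).radical := by
  classical
  have hX (i : σ) : stretch K j a (X i) = if i = j then X j ^ a else X i := by
    simp [stretch, Function.update_apply]
  apply le_antisymm
  · refine Ideal.radical_mono (Ideal.map_le_iff_le_comap.2 (Ideal.span_le.2 ?_))
    rintro _ ⟨i, rfl⟩
    rw [SetLike.mem_coe, Ideal.mem_comap, hX]
    split_ifs
    · exact Ideal.pow_mem_of_mem _ (Ideal.subset_span (Set.mem_range_self j)) a ha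
    · exact Ideal.subset_span (Set.mem_range_self i)
  · refine Ideal.radical_le_radical_iff.2 (Ideal.span_le.2 ?_)
    rintro _ ⟨i, rfl⟩
    have hi : stretch K j a (X i) ∈ (idealOfVars σ K).map (stretch K j a) :=
      Ideal.mem_map_of_mem _ (Ideal.subset_span (Set.mem_range_self i))
    rw [hX] at hi
    split_ifs at hi with hij
    · exact ⟨a, hij ▸ hi⟩
    · exact Ideal.le_radical hi

end Stretch

section MonomialDepth

universe u

variable {σ : Type u} (K : Type u) [CommRing K] {A : Set (σ →₀ ℕ)}

/-- The depth of `R / I_A` with respect to the ideal of the variables of `R = K[x_i : i ∈ σ]`,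
where `I_A` is the monomial ideal with exponent set `A`. The value is `⊤` if `A` contains `0`. -/
noncomputable def monomialDepth (hA : IsUpperSet A) : ℕ∞ :=
  idealGrade (idealOfVars σ K) (MvPolynomial σ K ⧸ restrictSupportIdeal K A hA)

theorem restrictSupportIdeal_le_idealOfVars (hA : IsUpperSet A) (h0 : 0 ∉ A) :
    restrictSupportIdeal K A hA ≤ idealOfVars σ K := by
  intro p hp
  rw [idealOfVars, ← Set.image_univ, mem_ideal_span_X_image]
  intro e he
  have he0 : e ≠ 0 := fun h => h0 (h ▸ hp he)
  simpa using Finsupp.ne_iff.1 he0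

theorem idealOfVars_ne_top [Nontrivial K] : idealOfVars σ K ≠ ⊤ := by
  rw [Ne, Ideal.eq_top_iff_one, ← C_1, ← pow_one (idealOfVars σ K), C_mem_pow_idealOfVars_iff]
  simp

theorem smul_top_quotient_lt_top {R : Type*} [CommRing R] {I J : Ideal R} (hIJ : I ≤ J)
    (hJ : J ≠ ⊤) : J • (⊤ : Submodule R (R ⧸ I)) < ⊤ := by
  have hmap : J • (⊤ : Submodule R (R ⧸ I)) = Submodule.map I.mkQ J := by
    rw [← I.range_mkQ, ← Submodule.map_top, ← Submodule.map_smul'', smul_eq_mul, Ideal.mul_top]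
  refine lt_top_iff_ne_top.2 fun h => hJ ?_
  rw [← sup_eq_right.2 hIJ, ← Submodule.comap_map_mkQ, ← hmap, h, Submodule.comap_top]

theorem monomialDepth_eq_iInf [Finite σ] [IsNoetherianRing K] [Nontrivial K] (hA : IsUpperSet A)
    (h0 : 0 ∉ A) (j : σ) {a : ℕ} (ha : 0 < a) :
    monomialDepth K hA =
      ⨅ r : Fin a, monomialDepth K (hA.preimage (modifyExp_mono j (monotone_add_mul r a))) := by
  have hlt := smul_top_quotient_lt_top (restrictSupportIdeal_le_idealOfVars K hA h0)
    (idealOfVars_ne_top K)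
  rw [monomialDepth, idealGrade_eq_of_radical_eq (radical_map_stretch_idealOfVars j ha).symm hlt]
  exact idealGrade_map_eq_iInf (interleave_bijective j ha)
    (interleave_mem_restrictSupportIdeal_iff j ha hA) _

theorem monotone_add_mul_div (r a b : ℕ) : Monotone fun t : ℕ => (r + a * t) / b :=
  fun _ _ h => Nat.div_le_div_right (monotone_add_mul r a h)

variable [Finite σ] [IsNoetherianRing K] [Nontrivial K]

theorem monomialDepth_preimage_div (hA : IsUpperSet A) (h0 : 0 ∉ A) (j : σ) {b : ℕ} (hb : 0 < b) :
    monomialDepth K (hA.preimage (modifyExp_mono j (fun _ _ h => Nat.div_le_div_right (c := b) h)))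
      = monomialDepth K hA := by
  have : Nonempty (Fin b) := ⟨0, hb⟩
  rw [monomialDepth_eq_iInf K _ (by simpa [modifyExp_zero]) j hb]
  refine (iInf_congr fun r => ?_).trans iInf_const
  congr 1
  rw [← Set.preimage_comp, modifyExp_comp]
  have hdiv : ((fun t : ℕ => t / b) ∘ fun t => r + b * t) = id := by
    ext t
    simp [Nat.add_mul_div_left _ _ hb, Nat.div_eq_of_lt r.2]
  rw [hdiv, modifyExp_id, Set.preimage_id]

theorem monomialDepth_le_preimage (hA : IsUpperSet A) (h0 : 0 ∉ A) (j : σ) {r a b : ℕ}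
    (hb : 0 < b) (hr : r < a) :
    monomialDepth K hA ≤
      monomialDepth K (hA.preimage (modifyExp_mono j (monotone_add_mul_div r a b))) := by
  rw [← monomialDepth_preimage_div K hA h0 j hb,
    monomialDepth_eq_iInf K _ (by simpa [modifyExp_zero]) j (Nat.zero_lt_of_lt hr)]
  refine (iInf_le _ ⟨r, hr⟩).trans_eq ?_
  congr 1
  rw [← Set.preimage_comp, modifyExp_comp]
  rfl

end MonomialDepth

section Weights

universe u

variable {σ : Type u} (adj : σ → σ → Prop)

/-- The exponents of the monomials in the edge ideal of the digraph `adj` with weights `w`, that is,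
of those divisible by `x_i * x_l ^ w l` for some edge `(i, l)`. For a loop `(i, i)` this is
`x_i ^ max 1 (w i)` rather than `x_i ^ (1 + w i)`. -/
def edgeExponents (w : σ → ℕ) : Set (σ →₀ ℕ) := {e | ∃ i l, adj i l ∧ 1 ≤ e i ∧ w l ≤ e l}

theorem isUpperSet_edgeExponents (w : σ → ℕ) : IsUpperSet (edgeExponents adj w) :=
  fun _ _ hde ⟨i, l, hil, hi, hl⟩ => ⟨i, l, hil, hi.trans (hde i), hl.trans (hde l)⟩

theorem zero_notMem_edgeExponents (w : σ → ℕ) : 0 ∉ edgeExponents adj w := by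
  simp [edgeExponents]

theorem preimage_modifyExp_edgeExponents [DecidableEq σ] (w : σ → ℕ) (j : σ) {c d : ℕ}
    {φ : ℕ → ℕ} (hφ_pos : ∀ t, 1 ≤ φ t ↔ 1 ≤ t) (hφ_weight : ∀ t, c ≤ φ t ↔ d ≤ t) :
    modifyExp j φ ⁻¹' edgeExponents adj (Function.update w j c) =
      edgeExponents adj (Function.update w j d) := by
  have h_pos (e : σ →₀ ℕ) (i : σ) : 1 ≤ modifyExp j φ e i ↔ 1 ≤ e i := by
    rcases eq_or_ne i j with rfl | hi
    · simpa only [modifyExp_self] using hφ_pos (e i)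
    · rw [modifyExp_of_ne hi]
  have h_weight (e : σ →₀ ℕ) (l : σ) : Function.update w j c l ≤ modifyExp j φ e l ↔
      Function.update w j d l ≤ e l := by
    rcases eq_or_ne l j with rfl | hl
    · simpa only [modifyExp_self, Function.update_self] using hφ_weight (e l)
    · simp only [modifyExp_of_ne hl, Function.update_of_ne hl]
  ext e
  simp only [edgeExponents, Set.mem_preimage, Set.mem_ofPred_eq, h_pos, h_weight]

variable (K : Type u) [CommRing K] [IsNoetherianRing K] [Nontrivial K] [Finite σ]

section UpdateWeight

variable [DecidableEq σ]

theorem monomialDepth_edgeExponents_update_le (w : σ → ℕ) (j : σ) {r a b c d : ℕ} (hb : 0 < b)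
    (hr : r < a) (h_pos : ∀ t, b ≤ r + a * t ↔ 1 ≤ t) (h_weight : ∀ t, c * b ≤ r + a * t ↔ d ≤ t) :
    monomialDepth K (isUpperSet_edgeExponents adj (Function.update w j c)) ≤
      monomialDepth K (isUpperSet_edgeExponents adj (Function.update w j d)) := by
  have hpre : modifyExp j (fun t => (r + a * t) / b) ⁻¹'
      edgeExponents adj (Function.update w j c) = edgeExponents adj (Function.update w j d) :=
    preimage_modifyExp_edgeExponents adj w j
      (fun t => by rw [Nat.le_div_iff_mul_le hb, one_mul, h_pos])
      (fun t => by rw [Nat.le_div_iff_mul_le hb, h_weight])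
  simp only [← hpre]
  exact monomialDepth_le_preimage K _ (zero_notMem_edgeExponents adj _) j hb hr

theorem monomialDepth_edgeExponents_update_anti (w : σ → ℕ) (j : σ) {c d : ℕ} (hd : 0 < d)
    (hdc : d ≤ c) :
    monomialDepth K (isUpperSet_edgeExponents adj (Function.update w j c)) ≤
      monomialDepth K (isUpperSet_edgeExponents adj (Function.update w j d)) := by
  have hc : 0 < c := hd.trans_le hdc
  refine monomialDepth_edgeExponents_update_le adj K w j (r := 0) (a := c) (b := d) hd hc
    (fun t => ?_) (fun t => ?_)
  · rw [zero_add]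
    exact ⟨fun h => Nat.pos_of_mul_pos_left (hd.trans_le h),
      fun h => hdc.trans (Nat.le_mul_of_pos_right c h)⟩
  · rw [zero_add, mul_le_mul_iff_right₀ hc]

theorem monomialDepth_edgeExponents_update_le_succ (w : σ → ℕ) (j : σ) {c : ℕ} (hc : 2 ≤ c) :
    monomialDepth K (isUpperSet_edgeExponents adj (Function.update w j c)) ≤
      monomialDepth K (isUpperSet_edgeExponents adj (Function.update w j (c + 1))) := by
  -- `c ≤ (c - 1 + c * t) / (c + 1)` means `c ^ 2 + 1 ≤ c * t`, that is, `c + 1 ≤ t`.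
  refine monomialDepth_edgeExponents_update_le adj K w j (r := c - 1) (a := c) (b := c + 1)
    (by omega) (by omega) (fun t => ⟨fun h => ?_, fun h => ?_⟩)
    (fun t => ⟨fun h => ?_, fun h => ?_⟩)
  · by_contra! ht
    rw [Nat.lt_one_iff.1 ht] at h
    omega
  · have : c ≤ c * t := Nat.le_mul_of_pos_right c h
    omega
  · by_contra! ht
    have : c * t ≤ c * c := by gcongr; omega
    rw [mul_add] at h
    omega
  · have : c * (c + 1) ≤ c * t := by gcongr
    omega

theorem monomialDepth_edgeExponents_update (w : σ → ℕ) (j : σ) {c : ℕ} (hc : 2 ≤ c) :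
    monomialDepth K (isUpperSet_edgeExponents adj (Function.update w j c)) =
      monomialDepth K (isUpperSet_edgeExponents adj (Function.update w j 2)) := by
  refine (monomialDepth_edgeExponents_update_anti adj K w j two_pos hc).antisymm ?_
  induction c, hc using Nat.le_induction with
  | base => rfl
  | succ c hc ih => exact ih.trans (monomialDepth_edgeExponents_update_le_succ adj K w j hc)

end UpdateWeight

theorem monomialDepth_edgeExponents_congr {v w : σ → ℕ}
    (h : ∀ i, v i = w i ∨ 2 ≤ v i ∧ 2 ≤ w i) :
    monomialDepth K (isUpperSet_edgeExponents adj v) =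
      monomialDepth K (isUpperSet_edgeExponents adj w) := by
  classical
  have := Fintype.ofFinite σ
  suffices hpiecewise : ∀ s : Finset σ,
      monomialDepth K (isUpperSet_edgeExponents adj (s.piecewise v w)) =
        monomialDepth K (isUpperSet_edgeExponents adj w) by simpa using hpiecewise Finset.univ
  intro s
  induction s using Finset.induction_on with
  | empty => simp only [Finset.piecewise_empty]
  | insert j s hj ih =>
    have hj' : s.piecewise v w j = w j := Finset.piecewise_eq_of_notMem s v w hj
    rw [← ih, Finset.piecewise_insert]
    conv_rhs => rw [← Function.update_eq_self j (s.piecewise v w), hj']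
    rcases h j with hvw | ⟨hv, hw⟩
    · rw [hvw]
    · rw [monomialDepth_edgeExponents_update adj K _ j hv,
        monomialDepth_edgeExponents_update adj K _ j hw]

end Weights

section EdgeIdeal

variable (K : Type) [Field K] {n : ℕ}

theorem depthQ_eq_idealGrade (σ : Type) (I : Ideal (MvPoly K σ)) :
    depthQ K σ I = idealGrade (maxIdeal K σ) (MvPoly K σ ⧸ I) := by
  simp only [depthQ, idealGrade, sInf_eq_iInf, Set.mem_ofPred_eq, iInf_exists, iInf_and,
    ← not_subsingleton_iff_nontrivial, subsingleton_linearYoneda_ext_iff]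
  rw [iInf_comm]
  simp only [iInf_iInf_eq_left]

theorem single_add_single_le_iff {σ : Type*} {i l : σ} (hil : i ≠ l) {a b : ℕ} {e : σ →₀ ℕ} :
    Finsupp.single i a + Finsupp.single l b ≤ e ↔ a ≤ e i ∧ b ≤ e l := by
  classical
  refine ⟨fun h => ⟨?_, ?_⟩, fun h k => ?_⟩
  · simpa [hil] using h i
  · simpa [hil.symm] using h l
  · rw [Finsupp.add_apply, Finsupp.single_apply, Finsupp.single_apply]
    grind

theorem edgeIdeal_eq_restrictSupportIdeal (D : VWDigraph n) :
    D.edgeIdeal K = restrictSupportIdeal K (edgeExponents D.adj D.wt)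
      (isUpperSet_edgeExponents D.adj D.wt) := by
  have hspan : D.edgeIdeal K = Ideal.span ((monomial · (1 : K)) ''
      {e | ∃ i l, D.adj i l ∧ e = Finsupp.single i 1 + Finsupp.single l (D.wt l)}) := by
    rw [VWDigraph.edgeIdeal]
    congr 1
    ext p
    constructor
    · rintro ⟨i, l, hil, rfl⟩
      exact ⟨_, ⟨i, l, hil, rfl⟩, by simp [monomial_add_single, X]⟩
    · rintro ⟨_, ⟨i, l, hil, rfl⟩, rfl⟩
      exact ⟨i, l, hil, by simp [monomial_add_single, X]⟩
  ext p
  rw [hspan, mem_ideal_span_monomial_image, mem_restrictSupportIdeal_iff]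
  refine forall_congr' fun e => imp_congr mem_support_iff ⟨?_, ?_⟩
  · rintro ⟨_, ⟨i, l, hil, rfl⟩, h⟩
    have hne : i ≠ l := fun h => D.loopless i (h ▸ hil)
    exact ⟨i, l, hil, (single_add_single_le_iff hne).1 h⟩
  · rintro ⟨i, l, hil, h⟩
    have hne : i ≠ l := fun h => D.loopless i (h ▸ hil)
    exact ⟨_, ⟨i, l, hil, rfl⟩, (single_add_single_le_iff hne).2 h⟩

theorem mem_zeroLocus_edgeIdeal_iff (D : VWDigraph n) (P : PrimeSpectrum (MvPoly K (Fin n))) :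
    P ∈ PrimeSpectrum.zeroLocus (D.edgeIdeal K : Set (MvPoly K (Fin n))) ↔
      ∀ i j, D.adj i j → X i ∈ P.asIdeal ∨ X j ∈ P.asIdeal := by
  rw [PrimeSpectrum.mem_zeroLocus, SetLike.coe_subset_coe, VWDigraph.edgeIdeal, Ideal.span_le]
  constructor
  · intro h i j hij
    exact (P.isPrime.mem_or_mem (h ⟨i, j, hij, rfl⟩)).imp_right (P.isPrime.mem_of_pow_mem _)
  · rintro h _ ⟨i, j, hij, rfl⟩
    rcases h i j hij with hi | hj
    · exact Ideal.mul_mem_right _ _ hi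
    · exact Ideal.mul_mem_left _ _ (Ideal.pow_mem_of_mem _ hj _ (D.wt_pos j))

theorem ringKrullDim_quotient_edgeIdeal_congr {D U : VWDigraph n} (hadj : U.adj = D.adj) :
    ringKrullDim (MvPoly K (Fin n) ⧸ D.edgeIdeal K) =
      ringKrullDim (MvPoly K (Fin n) ⧸ U.edgeIdeal K) := by
  have hzero : PrimeSpectrum.zeroLocus (D.edgeIdeal K : Set (MvPoly K (Fin n))) =
      PrimeSpectrum.zeroLocus (U.edgeIdeal K) :=
    Set.ext fun P => by rw [mem_zeroLocus_edgeIdeal_iff, mem_zeroLocus_edgeIdeal_iff, hadj]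
  rw [ringKrullDim_quotient, ringKrullDim_quotient, hzero]

theorem depthQ_edgeIdeal_congr {D U : VWDigraph n} (hadj : U.adj = D.adj)
    (hwt : ∀ i, D.wt i = 1 ↔ U.wt i = 1) :
    depthQ K (Fin n) (D.edgeIdeal K) = depthQ K (Fin n) (U.edgeIdeal K) := by
  rw [depthQ_eq_idealGrade, depthQ_eq_idealGrade, edgeIdeal_eq_restrictSupportIdeal,
    edgeIdeal_eq_restrictSupportIdeal, hadj]
  refine monomialDepth_edgeExponents_congr D.adj K fun i => ?_
  have := hwt i
  have := D.wt_pos i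
  have := U.wt_pos i
  omega

end EdgeIdeal

theorem stmt7_general (K : Type) [Field K] (n : ℕ) (D U : VWDigraph n)
    (hadj : U.adj = D.adj) (hwt : ∀ i, D.wt i = 1 ↔ U.wt i = 1) :
    IsCMQ K (Fin n) (D.edgeIdeal K) ↔ IsCMQ K (Fin n) (U.edgeIdeal K) := by
  rw [IsCMQ, IsCMQ, depthQ_edgeIdeal_congr K hadj hwt,
    ringKrullDim_quotient_edgeIdeal_congr K hadj]

/-- the Cohen–Macaulay property of the edge ideal of a vertex-weighted
digraph only depends on which weights are at least `2`. -/
theorem stmt7 (K : Type) [Field K] (n : ℕ) (D U : VWDigraph n)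
    (hadj : U.adj = D.adj)
    (hwt : U.wt = fun i => if 2 ≤ D.wt i then 2 else D.wt i) :
    IsCMQ K (Fin n) (D.edgeIdeal K) ↔ IsCMQ K (Fin n) (U.edgeIdeal K) :=
  stmt7_general K n D U hadj fun i => by rw [hwt]; grind
end

section
/- If I ⊆ R is a monomial ideal, then depth(R/rad(I)) ≥ depth(R/I), where rad(I) is the radical of I. In particular, if R/I is Cohen–Macaulay, then R/rad(I) is Cohen–Macaulay. -/
/-!
Let `J = rad(I)` and let `k` be a positive bound for the exponents of a finite set of monomial
generators of `I`. The endomorphism `φ : x_i ↦ x_i^k` of `R` maps `J` into `I`. In the other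
direction, the `K`-linear contraction `x^(k b) ↦ x^b` (and `x^a ↦ 0` if `k` does not divide `a`)
maps `I` into `J`, is a left inverse of `φ` and is `R`-linear when `R` acts on its source through
`φ`. Hence `R/J` is a direct summand of `R/I` viewed as an `R`-module through `φ`.

By the Rees theorem, `depth R/I ≥ d` means that `R/I` has a regular sequence of length `d` in `m`.
As `φ(m)R` and `m` have the same radical, `Ext^i(R/φ(m)R, R/I) = 0` for `i < d`, and prime
avoidance then gives `r_1, …, r_d ∈ m` such that `φ(r_1), …, φ(r_d)` is regular on `R/I`. By the
direct summand property `r_1, …, r_d` is regular on `R/J`, so `depth R/J ≥ d`.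

For the Cohen–Macaulay statement, `R/I` and `R/J` have the same dimension, and depth is at most
dimension because a regular element lowers the dimension of the support.
-/

open MvPolynomial CategoryTheory Opposite

universe v

open RingTheory.Sequence

section Ext

variable {R C : Type*} [Ring R] [Category* C] [Abelian C] [Linear R C]

theorem subsingleton_hom_iff_of_exact {S : ShortComplex C} (hS : S.Exact) [Epi S.g] (Y : C) :
    Subsingleton (S.X₃ ⟶ Y) ↔ ∀ f : S.X₂ ⟶ Y, S.f ≫ f = 0 → f = 0 := by
  refine ⟨fun _ f hf => ?_, fun h => subsingleton_of_forall_eq 0 fun g => ?_⟩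
  · rw [← hS.g_desc f hf, Subsingleton.elim (hS.desc f hf) 0, Limits.comp_zero]
  · rw [← cancel_epi S.g, Limits.comp_zero]
    exact h _ (by rw [← Category.assoc, S.zero, Limits.zero_comp])

variable {X Y : C} (P : ProjectiveResolution X)

theorem linearYonedaObj_exactAt_zero_iff :
    (P.complex.linearYonedaObj R Y).ExactAt 0 ↔
      ∀ f : P.complex.X 0 ⟶ Y, P.complex.d 1 0 ≫ f = 0 → f = 0 := by
  rw [HomologicalComplex.exactAt_iff' _ 0 0 1 (by simp) (by simp),
    ShortComplex.moduleCat_exact_iff]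
  refine forall₂_congr fun f _ => ⟨?_, fun hf => ⟨0, (map_zero _).trans hf.symm⟩⟩
  rintro ⟨g, rfl⟩
  exact (congrArg (· ≫ g) (P.complex.shape 0 0 (by simp))).trans Limits.zero_comp

theorem linearYonedaObj_exactAt_succ_iff (i : ℕ) :
    (P.complex.linearYonedaObj R Y).ExactAt (i + 1) ↔
      ∀ f : P.complex.X (i + 1) ⟶ Y, P.complex.d (i + 2) (i + 1) ≫ f = 0 →
        ∃ g : P.complex.X i ⟶ Y, P.complex.d (i + 1) i ≫ g = f := by
  rw [HomologicalComplex.exactAt_iff' _ i (i + 1) (i + 2) (by simp) (by simp),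
    ShortComplex.moduleCat_exact_iff]
  rfl

theorem subsingleton_abelianExt_succ_iff [HasExt C] (i : ℕ) :
    Subsingleton (Abelian.Ext X Y (i + 1)) ↔
      ∀ f : P.complex.X (i + 1) ⟶ Y, P.complex.d (i + 2) (i + 1) ≫ f = 0 →
        ∃ g : P.complex.X i ⟶ Y, P.complex.d (i + 1) i ≫ g = f := by
  refine ⟨fun _ f hf => ?_, fun h => subsingleton_of_forall_eq 0 fun α => ?_⟩
  · exact (P.extMk_eq_zero_iff f (i + 2) rfl hf i rfl).1 (Subsingleton.elim _ _)
  · obtain ⟨f, hf, rfl⟩ := P.extMk_surjective α (i + 2) rfl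
    exact (P.extMk_eq_zero_iff f (i + 2) rfl hf i rfl).2 (h f hf)

variable (R X Y) in
/-- Mathlib has no comparison isomorphism between these two versions of `Ext`; both are computed by
a projective resolution. -/
theorem subsingleton_ext_obj_iff_subsingleton_abelianExt [EnoughProjectives C] [HasExt C] (i : ℕ) :
    Subsingleton (((Ext R C i).obj (op X)).obj Y) ↔ Subsingleton (Abelian.Ext X Y i) := by
  let P := ProjectiveResolution.of X
  rw [(P.isoExt (R := R) i Y).toLinearEquiv.toEquiv.subsingleton_congr,
    ← ModuleCat.isZero_iff_subsingleton, ← HomologicalComplex.exactAt_iff_isZero_homology]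
  cases i with
  | zero =>
    rw [linearYonedaObj_exactAt_zero_iff, Abelian.Ext.addEquiv₀.subsingleton_congr,
      ← subsingleton_hom_iff_of_exact P.exact₀ Y]
    rfl
  | succ i => rw [linearYonedaObj_exactAt_succ_iff, subsingleton_abelianExt_succ_iff P]

end Ext

section RegularSequence

/-- The primes to avoid are the contractions of the associated primes of `M`. -/
theorem exists_mem_isSMulRegular_map_of_mem_map {R S M : Type*} [CommRing R] [CommRing S]
    [IsNoetherianRing S] [AddCommGroup M] [Module S M] [Module.Finite S M] (φ : R →+* S)
    (𝔪 : Ideal R) {y : S} (hy : y ∈ 𝔪.map φ) (hreg : IsSMulRegular M y) :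
    ∃ x ∈ 𝔪, IsSMulRegular M (φ x) := by
  have h_union (s : S) : s ∈ ⋃ p ∈ associatedPrimes S M, (p : Set S) ↔ ¬ IsSMulRegular M s := by
    rw [biUnion_associatedPrimes_eq_compl_regular]; rfl
  by_contra! h
  have h_subset : (𝔪 : Set R) ⊆ ⋃ p ∈ associatedPrimes S M, (p.comap φ : Ideal R) := fun x hx => by
    simpa using (h_union (φ x)).2 (h x hx)
  obtain ⟨p, hp, hmp⟩ := (Ideal.subset_union_prime_finite (associatedPrimes.finite S M)
    (f := Ideal.comap φ) ⊤ ⊤ fun p hp _ _ => hp.isPrime.comap φ).1 h_subset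
  exact (h_union y).1 (Set.mem_biUnion hp (Ideal.map_le_iff_le_comap.2 hmp hy)) hreg

theorem subsingleton_ext_quotSMulTop {R : Type*} [CommRing R] [Small.{v} R]
    {M N : ModuleCat.{v} R} {x : R} (hx : IsSMulRegular M x) (i : ℕ)
    [h₁ : Subsingleton (Abelian.Ext N M i)] [h₂ : Subsingleton (Abelian.Ext N M (i + 1))] :
    Subsingleton (Abelian.Ext N (ModuleCat.of R (QuotSMulTop x M)) i) :=
  AddCommGrpCat.subsingleton_of_isZero <| ShortComplex.Exact.isZero_of_both_zeros
    (Abelian.Ext.covariant_sequence_exact₃' N hx.smulShortComplex_shortExact i (i + 1) rfl)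
    ((AddCommGrpCat.isZero_of_iff_subsingleton.mpr h₁).eq_zero_of_src _)
    ((AddCommGrpCat.isZero_of_iff_subsingleton.mpr h₂).eq_zero_of_tgt _)

theorem exists_isWeaklyRegular_map_of_subsingleton_ext {R S : Type*} [CommRing R] [CommRing S]
    [Small.{v} S] [IsNoetherianRing S] (φ : R →+* S) (𝔪 : Ideal R) (N : ModuleCat.{v} S)
    [Module.Finite S N] (hN : Module.annihilator S N ≤ 𝔪.map φ) (d : ℕ) (M : ModuleCat.{v} S)
    [Module.Finite S M] (hext : ∀ i < d, Subsingleton (Abelian.Ext N M i)) :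
    ∃ rs : List R, rs.length = d ∧ (∀ r ∈ rs, r ∈ 𝔪) ∧ IsWeaklyRegular M (rs.map φ) := by
  induction d generalizing M with
  | zero => exact ⟨[], by simp⟩
  | succ d ih =>
    have := hext 0 d.succ_pos
    have : Subsingleton (N →ₗ[S] M) :=
      (Abelian.Ext.addEquiv₀.trans ModuleCat.homAddEquiv).symm.subsingleton
    obtain ⟨y, hy, hyreg⟩ := IsSMulRegular.subsingleton_linearMap_iff.mp this
    obtain ⟨x, hx, hxreg⟩ := exists_mem_isSMulRegular_map_of_mem_map φ 𝔪 (hN hy) hyreg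
    obtain ⟨rs, rfl, hmem, hrs⟩ := ih (ModuleCat.of S (QuotSMulTop (φ x) M)) fun i hi =>
      have := hext i (by omega)
      have := hext (i + 1) (by omega)
      subsingleton_ext_quotSMulTop hxreg i
    exact ⟨x :: rs, rfl, List.forall_mem_cons.2 ⟨hx, hmem⟩, hrs.cons hxreg⟩

theorem exists_isWeaklyRegular_map_of_isRegular_of_subset_radical {R : Type*} {S M : Type v}
    [CommRing R] [CommRing S] [IsNoetherianRing S] [AddCommGroup M] [Module S M] [Module.Finite S M]
    (φ : R →+* S) (𝔪 : Ideal R) {ss : List S} (hss : IsRegular M ss)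
    (hmem : ∀ s ∈ ss, s ∈ (𝔪.map φ).radical) :
    ∃ rs : List R, rs.length = ss.length ∧ (∀ r ∈ rs, r ∈ 𝔪) ∧
      IsWeaklyRegular M (rs.map φ) := by
  let N := ModuleCat.of S (S ⧸ 𝔪.map φ)
  have h_supp : Module.support S N ⊆ PrimeSpectrum.zeroLocus (Ideal.ofList ss : Ideal S) := by
    rw [Module.support_eq_zeroLocus, Ideal.annihilator_quotient,
      PrimeSpectrum.zeroLocus_subset_zeroLocus_iff]
    exact Ideal.span_le.2 hmem
  have h_ext := ModuleCat.subsingleton_ext_of_exists_isRegular (Ideal.ofList ss) N h_supp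
    (ModuleCat.of S M) hss.top_ne_smul.symm.lt_top ss (fun _ hs => Ideal.subset_span hs) hss
  exact exists_isWeaklyRegular_map_of_subsingleton_ext φ 𝔪 N Ideal.annihilator_quotient.le _
    (ModuleCat.of S M) h_ext

theorem isRegular_of_isWeaklyRegular_of_smul_top_ne_top {R M : Type*} [CommRing R]
    [AddCommGroup M] [Module R M] {𝔪 : Ideal R} (h𝔪 : 𝔪 • (⊤ : Submodule R M) ≠ ⊤) {rs : List R}
    (hmem : ∀ r ∈ rs, r ∈ 𝔪) (h : IsWeaklyRegular M rs) : IsRegular M rs :=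
  ⟨h, fun h_top => h𝔪 <| top_le_iff.1 <|
    h_top.le.trans (Submodule.smul_mono_left (Ideal.span_le.2 hmem))⟩

theorem smul_top_quotient_ne_top {R : Type*} [CommRing R] {I 𝔪 : Ideal R} (h : I ⊔ 𝔪 ≠ ⊤) :
    𝔪 • (⊤ : Submodule R (R ⧸ I)) ≠ ⊤ := by
  intro h_top
  have := congrArg (Submodule.comap I.mkQ) h_top
  rw [← Submodule.range_mkQ, ← Submodule.map_top, ← Submodule.map_smul'',
    Submodule.comap_map_mkQ] at this
  exact h (by simpa using this)

theorem length_le_supportDim_of_isRegular {R M : Type*} [CommRing R] [AddCommGroup M] [Module R M]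
    [Module.Finite R M] {rs : List R} (h : IsRegular M rs) :
    ((rs.length : ℕ∞) : WithBot ℕ∞) ≤ Module.supportDim R M := by
  induction rs generalizing M with
  | nil =>
    have := h.nontrivial
    have := (Module.nonempty_support_of_nontrivial (R := R) (M := M)).to_subtype
    exact Order.krullDim_nonneg
  | cons x rs ih =>
    obtain ⟨hx, hrs⟩ := (isRegular_cons_iff M x rs).1 h
    calc (((x :: rs).length : ℕ∞) : WithBot ℕ∞) = ((rs.length : ℕ∞) : WithBot ℕ∞) + 1 := by simp
      _ ≤ Module.supportDim R (QuotSMulTop x M) + 1 := add_le_add_left (ih hrs) 1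
      _ ≤ Module.supportDim R M :=
        Module.supportDim_quotSMulTop_succ_le_of_notMem_minimalPrimes fun _ =>
          hx.notMem_of_mem_minimalPrimes

variable {R S N M : Type*} [CommRing R] [CommRing S] [AddCommGroup N] [Module R N]
  [AddCommGroup M] [Module S M] {φ : R →+* S}

theorem map_mem_map_smul_top (ι : N →ₛₗ[φ] M) (𝔞 : Ideal R) {n : N}
    (hn : n ∈ (𝔞 • ⊤ : Submodule R N)) : ι n ∈ (𝔞.map φ • ⊤ : Submodule S M) := by
  induction hn using Submodule.smul_induction_on' with
  | smul r hr n _ =>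
    rw [map_smulₛₗ]
    exact Submodule.smul_mem_smul (Ideal.mem_map_of_mem φ hr) trivial
  | add a _ b _ ha hb => rw [map_add]; exact add_mem ha hb

theorem map_mem_smul_top_of_map_smul (π : M →+ N) (hπ : ∀ (r : R) (x : M), π (φ r • x) = r • π x)
    (𝔞 : Ideal R) {x : M} (hx : x ∈ (𝔞.map φ • ⊤ : Submodule S M)) :
    π x ∈ (𝔞 • ⊤ : Submodule R N) := by
  have h_smul {s : S} (hs : s ∈ 𝔞.map φ) : ∀ y : M, π (s • y) ∈ (𝔞 • ⊤ : Submodule R N) := by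
    induction hs using Submodule.span_induction with
    | mem _ hs =>
      obtain ⟨r, hr, rfl⟩ := hs
      exact fun y => hπ r y ▸ Submodule.smul_mem_smul hr trivial
    | zero => simp
    | add s t _ _ hs ht => exact fun y => by rw [add_smul, map_add]; exact add_mem (hs y) (ht y)
    | smul a s _ hs => exact fun y => by rw [smul_eq_mul, mul_comm, mul_smul]; exact hs (a • y)
  induction hx using Submodule.smul_induction_on' with
  | smul s hs y _ => exact h_smul hs y
  | add a _ b _ ha hb => rw [map_add]; exact add_mem ha hb

/-- `N` is a direct summand of `M` over `R`; restriction of scalars along `φ` is kept implicit. -/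
theorem isWeaklyRegular_of_retraction (ι : N →ₛₗ[φ] M) (π : M →+ N)
    (hπ : ∀ (r : R) (x : M), π (φ r • x) = r • π x) (hπι : Function.LeftInverse π ι)
    {rs : List R} (h : IsWeaklyRegular M (rs.map φ)) : IsWeaklyRegular N rs := by
  have h_pure (𝔞 : Ideal R) (n : N) (hn : ι n ∈ (𝔞.map φ • ⊤ : Submodule S M)) :
      n ∈ (𝔞 • ⊤ : Submodule R N) :=
    hπι n ▸ map_mem_smul_top_of_map_smul π hπ 𝔞 hn
  refine ⟨fun i hi => (isSMulRegular_quotient_iff_mem_of_smul_mem _ _).2 fun n hn => ?_⟩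
  have h_reg := h.regular_mod_prev i (by simpa using hi)
  rw [← List.map_take, ← Ideal.map_ofList, List.getElem_map] at h_reg
  refine h_pure _ n (mem_of_isSMulRegular_quotient_of_smul_mem h_reg ?_)
  rw [← map_smulₛₗ]
  exact map_mem_map_smul_top ι _ hn

theorem isWeaklyRegular_quotient_of_retraction (ψ : S →+ R) (hψ : ∀ r s, ψ (φ r * s) = r * ψ s)
    (hψ_one : ψ 1 = 1) {J : Ideal R} {I : Ideal S} (hφJ : J ≤ I.comap φ)
    (hψI : ∀ s ∈ I, ψ s ∈ J) {rs : List R} (h : IsWeaklyRegular (S ⧸ I) (rs.map φ)) :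
    IsWeaklyRegular (R ⧸ J) rs := by
  let ι : R ⧸ J →ₛₗ[φ] S ⧸ I := Submodule.mapQ J I φ.toSemilinearMap hφJ
  let π : S ⧸ I →+ R ⧸ J := QuotientAddGroup.map I.toAddSubgroup J.toAddSubgroup ψ hψI
  have hψφ (r : R) : ψ (φ r) = r := by simpa [hψ_one] using hψ r 1
  refine isWeaklyRegular_of_retraction ι π (fun r x => ?_) (fun x => ?_) h
  · obtain ⟨x, rfl⟩ := Ideal.Quotient.mk_surjective x
    exact congrArg (Ideal.Quotient.mk J) (hψ r x)
  · obtain ⟨x, rfl⟩ := Ideal.Quotient.mk_surjective x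
    exact congrArg (Ideal.Quotient.mk J) (hψφ x)

end RegularSequence

section MonomialIdeal

section Contract

variable {σ R : Type*} [CommSemiring R] {k : ℕ} (hk : k ≠ 0)

/-- The additive map `x^(k b) ↦ x^b` that kills `x^a` whenever `k` does not divide `a`: the left
inverse of `MvPolynomial.expand k` corresponding to `Polynomial.contract`. -/
noncomputable def contract : MvPolynomial σ R →+ MvPolynomial σ R :=
  AddMonoidAlgebra.comapDomainAddMonoidHom (k • ·) (nsmul_right_injective hk)

theorem coeff_contract (f : MvPolynomial σ R) (b : σ →₀ ℕ) :
    coeff b (contract hk f) = coeff (k • b) f :=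
  rfl

theorem contract_one : contract hk (1 : MvPolynomial σ R) = 1 := by
  classical
  ext b
  simp [coeff_contract, coeff_one, hk, eq_comm (a := (0 : σ →₀ ℕ))]

theorem contract_expand_mul (f g : MvPolynomial σ R) :
    contract hk (expand k f * g) = f * contract hk g := by
  induction f using MvPolynomial.induction_on' with
  | add p q hp hq => rw [map_add, add_mul, map_add, hp, hq, add_mul]
  | monomial a r =>
    ext b
    have h_le : k • a ≤ k • b ↔ a ≤ b :=
      forall_congr' fun _ => mul_le_mul_iff_right₀ (Nat.pos_of_ne_zero hk)
    have h_sub : k • b - k • a = k • (b - a) := by ext; simp [Nat.mul_sub]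
    simp only [coeff_contract, expand_monomial, coeff_monomial_mul', h_le, h_sub]

theorem contract_mem_radical_span_monomial {S : Set (σ →₀ ℕ)} {f : MvPolynomial σ R}
    (hf : f ∈ Ideal.span ((fun s => monomial s (1 : R)) '' S)) :
    contract hk f ∈ (Ideal.span ((fun s => monomial s (1 : R)) '' S)).radical := by
  rw [mem_ideal_span_monomial_image] at hf
  rw [(contract hk f).as_sum]
  refine Ideal.sum_mem _ fun b hb => ⟨k, mem_ideal_span_monomial_image.2 fun c hc => ?_⟩
  rw [monomial_pow] at hc
  obtain rfl := Finset.mem_singleton.1 (support_monomial_subset hc)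
  exact hf _ (by rwa [mem_support_iff, coeff_contract, ← mem_support_iff] at hb)

end Contract

section Radical

variable {σ R : Type*} [CommRing R] {S : Set (σ →₀ ℕ)} {f : MvPolynomial σ R}

theorem support_subset_of_mem_radical_span_monomial [IsReduced R]
    (hf : f ∈ (Ideal.span ((fun s => monomial s (1 : R)) '' S)).radical) {a : σ →₀ ℕ}
    (ha : a ∈ f.support) : ∃ s ∈ S, s.support ⊆ a.support := by
  by_contra! h
  have h_range : Set.range ((↑) : a.support → σ) = a.support := Subtype.range_coe
  -- `κ` sets the variables that do not divide `x^a` to zero.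
  let κ := killCompl (R := R) (Subtype.val_injective (p := (· ∈ a.support)))
  have h_ker : Ideal.span ((fun s => monomial s (1 : R)) '' S) ≤ RingHom.ker κ := by
    rw [Ideal.span_le]
    rintro _ ⟨s, hs, rfl⟩
    exact killCompl_monomial_eq_zero_of_not_subset _ _
      (by simpa only [h_range, Finset.coe_subset] using h s hs)
  obtain ⟨N, hN⟩ := hf
  have hκf : κ f = 0 := eq_zero_of_pow_eq_zero ((map_pow κ f N).symm.trans (h_ker hN))
  refine mem_support_iff.1 ha ?_
  rw [← Finsupp.mapDomain_comapDomain _ Subtype.val_injective a h_range.ge, ← coeff_killCompl]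
  exact (congrArg (coeff _) hκf).trans (coeff_zero _)

theorem expand_mem_span_monomial [IsReduced R] {k : ℕ} (hk : ∀ s ∈ S, ∀ i, s i ≤ k)
    (hf : f ∈ (Ideal.span ((fun s => monomial s (1 : R)) '' S)).radical) :
    expand k f ∈ Ideal.span ((fun s => monomial s (1 : R)) '' S) := by
  classical
  rw [mem_ideal_span_monomial_image]
  intro b hb
  obtain ⟨a, ha, rfl⟩ := Finset.mem_image.1 (support_expand_subset f hb)
  obtain ⟨s, hs, hsa⟩ := support_subset_of_mem_radical_span_monomial hf ha
  refine ⟨s, hs, fun i => ?_⟩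
  by_cases hi : s i = 0
  · simp [hi]
  · have hai : a i ≠ 0 := Finsupp.mem_support_iff.1 (hsa (Finsupp.mem_support_iff.2 hi))
    exact (hk s hs i).trans (Nat.le_mul_of_pos_right k (Nat.pos_of_ne_zero hai))

theorem exists_expand_mem_span_monomial [Finite σ] [IsNoetherianRing R] [IsReduced R]
    (S : Set (σ →₀ ℕ)) :
    ∃ k ≠ 0, ∀ f ∈ (Ideal.span ((fun s => monomial s (1 : R)) '' S)).radical,
      expand k f ∈ Ideal.span ((fun s => monomial s (1 : R)) '' S) := by
  classical
  obtain ⟨_, hGS, hG⟩ := (Submodule.fg_span_iff_fg_span_finset_subset _).1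
    (IsNoetherian.noetherian (Ideal.span ((fun s => monomial s (1 : R)) '' S)))
  obtain ⟨G, -, rfl⟩ := Finset.subset_set_image_iff.1 hGS
  rw [Finset.coe_image] at hG
  obtain ⟨b, hb⟩ := G.bddAbove
  refine ⟨b.degree + 1, Nat.succ_ne_zero _, fun f hf => ?_⟩
  rw [Ideal.span, hG] at hf ⊢
  exact expand_mem_span_monomial
    (fun s hs i => (hb hs i).trans ((b.le_degree i).trans (Nat.le_succ _))) hf

end Radical

end MonomialIdeal

section Depth

variable {K : Type} [Field K] {σ τ : Type}

theorem mem_maxIdeal_iff {f : MvPoly K σ} : f ∈ maxIdeal K σ ↔ constantCoeff f = 0 := by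
  rw [maxIdeal, ← idealOfVars, ← pow_one (idealOfVars σ K), mem_pow_idealOfVars_iff']
  simp [constantCoeff_eq, Finsupp.degree_eq_zero_iff]

instance isPrime_maxIdeal : (maxIdeal K σ).IsPrime := by
  have : maxIdeal K σ = RingHom.ker constantCoeff := Ideal.ext fun _ => mem_maxIdeal_iff
  exact this ▸ RingHom.ker_isPrime _

theorem IsMonomialIdeal.le_maxIdeal {n : ℕ} {I : Ideal (MvPoly K (Fin n))}
    (hI : IsMonomialIdeal K I) (h : I ≠ ⊤) : I ≤ maxIdeal K (Fin n) := by
  obtain ⟨S, rfl⟩ := hI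
  refine Ideal.span_le.2 ?_
  rintro _ ⟨s, hs, rfl⟩
  refine mem_maxIdeal_iff.2 ((coeff_monomial ..).trans (if_neg ?_))
  rintro rfl
  exact h ((Ideal.eq_top_iff_one _).2 (Ideal.subset_span ⟨0, hs, rfl⟩))

theorem maxIdeal_le_radical_map_expand (k : ℕ) :
    maxIdeal K σ ≤ ((maxIdeal K σ).map (expand (R := K) (σ := σ) k).toRingHom).radical := by
  refine Ideal.span_le.2 ?_
  rintro _ ⟨i, rfl⟩
  refine ⟨k, ?_⟩
  rw [← expand_X k i]
  exact Ideal.mem_map_of_mem _ (Ideal.subset_span ⟨i, rfl⟩)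

theorem maxIdeal_smul_top_lt_top {I : Ideal (MvPoly K σ)} (hI : I ≤ maxIdeal K σ) :
    maxIdeal K σ • (⊤ : Submodule (MvPoly K σ) (MvPoly K σ ⧸ I)) < ⊤ :=
  (smul_top_quotient_ne_top ((sup_eq_right.2 hI).trans_ne isPrime_maxIdeal.ne_top)).lt_top

theorem natCast_le_depthQ_iff {I : Ideal (MvPoly K σ)} {d : ℕ} :
    (d : ℕ∞) ≤ depthQ K σ I ↔ ∀ i < d, Subsingleton (Abelian.Ext
      (ModuleCat.of (MvPoly K σ) (MvPoly K σ ⧸ maxIdeal K σ))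
      (ModuleCat.of (MvPoly K σ) (MvPoly K σ ⧸ I)) i) := by
  simp only [← subsingleton_ext_obj_iff_subsingleton_abelianExt (MvPoly K σ),
    ← not_nontrivial_iff_subsingleton, depthQ, le_sInf_iff, Set.mem_ofPred_eq, forall_exists_index,
    and_imp]
  refine ⟨fun h i hi hnt => (Nat.cast_le.1 (h i i rfl hnt)).not_gt hi, ?_⟩
  rintro h _ i rfl hnt
  exact Nat.cast_le.2 (not_lt.1 fun hi => h i hi hnt)

theorem natCast_le_depthQ_iff_exists_isRegular [Finite σ] {I : Ideal (MvPoly K σ)}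
    (hI : I ≤ maxIdeal K σ) {d : ℕ} :
    (d : ℕ∞) ≤ depthQ K σ I ↔ ∃ rs : List (MvPoly K σ), rs.length = d ∧
      (∀ r ∈ rs, r ∈ maxIdeal K σ) ∧ IsRegular (MvPoly K σ ⧸ I) rs := by
  have h_supp : Module.support (MvPoly K σ) (MvPoly K σ ⧸ maxIdeal K σ) =
      PrimeSpectrum.zeroLocus (maxIdeal K σ) := by
    rw [Module.support_eq_zeroLocus, Ideal.annihilator_quotient]
  rw [natCast_le_depthQ_iff]
  constructor
  · exact ModuleCat.exists_isRegular_of_exists_subsingleton_ext _ d _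
      (maxIdeal_smul_top_lt_top hI) _ h_supp
  · rintro ⟨rs, rfl, hmem, hrs⟩
    exact ModuleCat.subsingleton_ext_of_exists_isRegular _ _ h_supp.subset _
      (maxIdeal_smul_top_lt_top hI) rs hmem hrs

theorem depthQ_le_depthQ_of_retraction [Finite σ] [Finite τ] {φ : MvPoly K σ →+* MvPoly K τ}
    (hφ : maxIdeal K τ ≤ ((maxIdeal K σ).map φ).radical) (ψ : MvPoly K τ →+ MvPoly K σ)
    (hψ : ∀ r f, ψ (φ r * f) = r * ψ f) (hψ_one : ψ 1 = 1) {J : Ideal (MvPoly K σ)}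
    {I : Ideal (MvPoly K τ)} (hJ : J ≤ maxIdeal K σ) (hI : I ≤ maxIdeal K τ)
    (hφJ : J ≤ I.comap φ) (hψI : ∀ f ∈ I, ψ f ∈ J) : depthQ K τ I ≤ depthQ K σ J := by
  rw [← ENat.forall_natCast_le_iff_le]
  intro d hd
  obtain ⟨ss, rfl, hmem, hss⟩ := (natCast_le_depthQ_iff_exists_isRegular hI).1 hd
  obtain ⟨rs, hlen, hrs_mem, hrs⟩ := exists_isWeaklyRegular_map_of_isRegular_of_subset_radical φ
    (maxIdeal K σ) hss fun s hs => hφ (hmem s hs)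
  refine (natCast_le_depthQ_iff_exists_isRegular hJ).2 ⟨rs, hlen, hrs_mem, ?_⟩
  exact isRegular_of_isWeaklyRegular_of_smul_top_ne_top (maxIdeal_smul_top_lt_top hJ).ne hrs_mem
    (isWeaklyRegular_quotient_of_retraction ψ hψ hψ_one hφJ hψI hrs)

theorem IsMonomialIdeal.depthQ_le_depthQ_radical {n : ℕ} {I : Ideal (MvPoly K (Fin n))}
    (hI : IsMonomialIdeal K I) : depthQ K (Fin n) I ≤ depthQ K (Fin n) I.radical := by
  by_cases h_top : I = ⊤
  · rw [h_top, Ideal.radical_top]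
  have hIm := hI.le_maxIdeal h_top
  obtain ⟨S, rfl⟩ := hI
  obtain ⟨k, hk, h_expand⟩ := exists_expand_mem_span_monomial (R := K) S
  exact depthQ_le_depthQ_of_retraction (φ := (expand k).toRingHom)
    (maxIdeal_le_radical_map_expand k) (contract hk) (contract_expand_mul hk) (contract_one hk)
    (isPrime_maxIdeal.radical_le_iff.2 hIm) hIm h_expand
    fun f hf => contract_mem_radical_span_monomial hk hf

theorem depthQ_le_ringKrullDim [Finite σ] {I : Ideal (MvPoly K σ)} (hI : I ≤ maxIdeal K σ) :
    ((depthQ K σ I : ℕ∞) : WithBot ℕ∞) ≤ ringKrullDim (MvPoly K σ ⧸ I) := by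
  have h_nat (d : ℕ) (hd : (d : ℕ∞) ≤ depthQ K σ I) :
      ((d : ℕ∞) : WithBot ℕ∞) ≤ ringKrullDim (MvPoly K σ ⧸ I) := by
    obtain ⟨rs, rfl, -, hrs⟩ := (natCast_le_depthQ_iff_exists_isRegular hI).1 hd
    exact Module.supportDim_quotient_eq_ringKrullDim I ▸ length_le_supportDim_of_isRegular hrs
  have h_bot : ringKrullDim (MvPoly K σ ⧸ I) ≠ ⊥ := fun h => by simpa [h] using h_nat 0 (by simp)
  obtain ⟨D, hD⟩ := WithBot.ne_bot_iff_exists.1 h_bot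
  rw [← hD, WithBot.coe_le_coe, ← ENat.forall_natCast_le_iff_le]
  exact fun d hd => WithBot.coe_le_coe.1 (hD ▸ h_nat d hd)

end Depth

/-- `depth R/rad(I) ≥ depth R/I` for a monomial ideal `I`; in particular
the radical of a Cohen–Macaulay monomial ideal is Cohen–Macaulay. -/
theorem stmt8 (K : Type) [Field K] (n : ℕ) (I : Ideal (MvPoly K (Fin n)))
    (hI : IsMonomialIdeal K I) :
    depthQ K (Fin n) I.radical ≥ depthQ K (Fin n) I ∧
    (IsCMQ K (Fin n) I → IsCMQ K (Fin n) I.radical) := by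
  have h_depth := hI.depthQ_le_depthQ_radical
  refine ⟨h_depth, fun hCM => ?_⟩
  by_cases h_top : I = ⊤
  · rwa [h_top, Ideal.radical_top, ← h_top]
  have h_dim : ringKrullDim (MvPoly K (Fin n) ⧸ I.radical) =
      ringKrullDim (MvPoly K (Fin n) ⧸ I) := by
    rw [ringKrullDim_quotient, ringKrullDim_quotient, PrimeSpectrum.zeroLocus_radical]
  refine le_antisymm
    (depthQ_le_ringKrullDim (isPrime_maxIdeal.radical_le_iff.2 (hI.le_maxIdeal h_top))) ?_
  calc ringKrullDim (MvPoly K (Fin n) ⧸ I.radical)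
      = ((depthQ K (Fin n) I : ℕ∞) : WithBot ℕ∞) := h_dim.trans (Eq.symm hCM)
    _ ≤ ((depthQ K (Fin n) I.radical : ℕ∞) : WithBot ℕ∞) := WithBot.coe_le_coe.2 h_depth
end

section
/- Let I and J be monomial ideals of R and let x_i be a variable. If (I : x_i) = J and I + (x_i) = J + (x_i), then: (i) reg(R/J) ≤ reg(R/I) ≤ reg(R/J) + 1; (ii) depth(R/J) − 1 ≤ depth(R/I) ≤ depth(R/J). -/
/-!
Write `x = x_i`. The hypotheses say that `J = (I : x)` and that `I` and `J` agree modulo `x`. For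
monomial ideals this means that, over the polynomial ring `A` in the other variables, the layer of
`R/I` of `x`-degree `t` is that of `R/J` of `x`-degree `t - 1` if `0 < t`, and that of `R/J` of
`x`-degree `0` if `t = 0`.

*Depth.* In fact `depth R/I = depth R/J`. For an `R`-module `N` and `B = R ⊗_A N` there is an exact
sequence `0 → B → B → N → 0` whose first map is `x ⊗ 1 - 1 ⊗ x`. As `x` kills `R/m`, on
`Ext(R/m, B)` this map is, up to sign, induced by `x : N → N` alone. Hence `Ext^n(R/m, N) = 0` if
and only if `x : N → N` acts surjectively on `Ext^n(R/m, B)` and injectively on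
`Ext^(n+1)(R/m, B)`, which depends only on the `A`-module `N` and its endomorphism `x`.
Multiplication by `x` factors as `u ∘ q` on `R/I` and as `q ∘ u` on `R/J`, where `q : R/I → R/J` is
the projection and `u : R/J → R/I` is multiplication by `x`; the splitting of the layer of
`x`-degree `0` over `A` makes the two conditions equivalent.

*Regularity.* A graded free resolution of `R/I` with twists bounded by `r` is refined to one which
is bigraded by total degree and `x`-degree and satisfies the same bound. This is done one step at a
time, carrying chain maps to and from the given resolution together with a homotopy, so that the new
syzygies have generators of controlled degree. In a bigraded resolution the `x`-degrees can be
relabelled along a Galois connection of `ℕ` with itself. Lowering the positive `x`-degrees by one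
turns a resolution of `R/I` into one of `R/J` without raising any twist; raising them by one turns a
resolution of `R/J` into one of `R/I` and raises the twists by at most one.
-/

open MvPolynomial CategoryTheory Opposite

noncomputable section

variable (K : Type) [Field K] (σ : Type)

/-- The degree-`e` homogeneous component condition, for an integer `e`
(for `e < 0` the component is zero). -/
def HomogComp (e : ℤ) (p : MvPoly K σ) : Prop :=
  if 0 ≤ e then p ∈ homogeneousSubmodule σ K e.toNat else p = 0

/-- `v` is a homogeneous element of degree `e` of the graded free module
`⊕_j R(-dg j)`. -/
def IsHomogVec {m : ℕ} (dg : Fin m → ℤ) (e : ℤ) (v : Fin m → MvPoly K σ) : Prop :=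
  ∀ j, HomogComp K σ (e - dg j) (v j)

/-- The degree-`e` homogeneous component of `R/I`. -/
def QuotComp (I : Ideal (MvPoly K σ)) (e : ℤ) : Submodule K (MvPoly K σ ⧸ I) :=
  if 0 ≤ e then
    Submodule.map (Ideal.Quotient.mkₐ K I).toLinearMap (homogeneousSubmodule σ K e.toNat)
  else ⊥

/-- A graded free resolution of `R/I` by finitely generated graded free modules
`F i = ⊕_{j < rk i} R(-dg i j)`, with degree preserving (degree zero) maps. -/
structure GradedFreeRes (I : Ideal (MvPoly K σ)) where
  rk : ℕ → ℕ
  dg : (i : ℕ) → Fin (rk i) → ℤ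
  dmap : (i : ℕ) → ((Fin (rk (i + 1)) → MvPoly K σ) →ₗ[MvPoly K σ] (Fin (rk i) → MvPoly K σ))
  aug : (Fin (rk 0) → MvPoly K σ) →ₗ[MvPoly K σ] (MvPoly K σ ⧸ I)
  aug_surj : Function.Surjective aug
  exact0 : Function.Exact (dmap 0) aug
  exactS : ∀ i, Function.Exact (dmap (i + 1)) (dmap i)
  graded : ∀ i (e : ℤ) v, IsHomogVec K σ (dg (i + 1)) e v → IsHomogVec K σ (dg i) e (dmap i v)
  aug_graded : ∀ (e : ℤ) v, IsHomogVec K σ (dg 0) e v → aug v ∈ QuotComp K σ I e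

/-- `R/I` admits a graded free resolution all of whose twists `dg i j` satisfy
`dg i j - i ≤ r`. -/
def ResBound (I : Ideal (MvPoly K σ)) (r : ℤ) : Prop :=
  ∃ F : GradedFreeRes K σ I, ∀ i j, F.dg i j - i ≤ r

open Classical in
/-- The Castelnuovo–Mumford regularity of `R/I`: the least `r` bounding the twists of
a graded free resolution of `R/I` (with the convention `⊥ = -∞` for the zero module). -/
def CMreg (I : Ideal (MvPoly K σ)) : WithBot ℤ :=
  if h : ∃ r : ℤ, ResBound K σ I r ∧ ∀ s : ℤ, ResBound K σ I s → r ≤ s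
  then ((h.choose : ℤ) : WithBot ℤ) else ⊥

variable {n : ℕ}

end

noncomputable section

section Ext

open Abelian in
theorem exactAt_linearYonedaObj_iff {R C : Type*} [Ring R] [Category C] [Abelian C] [Linear R C]
    [HasExt C] {X : C} (P : ProjectiveResolution X) (Y : C) (n : ℕ) :
    (P.complex.linearYonedaObj R Y).ExactAt n ↔ Subsingleton (Abelian.Ext X Y n) := by
  cases n with
  | zero =>
    rw [HomologicalComplex.exactAt_iff' _ 0 0 1 (by simp) (by simp),
      ShortComplex.moduleCat_exact_iff, Ext.homEquiv₀.subsingleton_congr,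
      subsingleton_iff_forall_eq 0]
    have hd : (P.complex.linearYonedaObj R Y).d 0 0 = 0 := HomologicalComplex.shape _ _ _ (by simp)
    refine ⟨fun h (g : ((ChainComplex.single₀ C).obj X).X 0 ⟶ Y) => ?_, fun h f hf => ⟨0, ?_⟩⟩
    · obtain ⟨e, he⟩ := h (P.π.f 0 ≫ g)
        (show P.complex.d 1 0 ≫ P.π.f 0 ≫ g = 0 by
          rw [← Category.assoc, P.complex_d_comp_π_f_zero, Limits.zero_comp])
      have : P.π.f 0 ≫ g = 0 := he.symm.trans (congrArg (fun φ => φ.hom e) hd)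
      exact (cancel_epi (P.π.f 0)).1 (this.trans Limits.comp_zero.symm)
    · have := P.exact₀.g_desc f hf
      rw [h (P.exact₀.desc f hf)] at this
      rw [map_zero, ← this]
      exact Limits.comp_zero.symm
  | succ k =>
    rw [HomologicalComplex.exactAt_iff' _ k (k + 1) (k + 2) (by simp) (by simp),
      ShortComplex.moduleCat_exact_iff, subsingleton_iff_forall_eq 0]
    refine ⟨fun h e => ?_, fun h f hf => ?_⟩
    · obtain ⟨f, hf, rfl⟩ := P.extMk_surjective e (k + 2) rfl
      exact (P.extMk_eq_zero_iff f _ rfl hf k rfl).2 (h f hf)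
    · exact (P.extMk_eq_zero_iff f (k + 2) rfl hf k rfl).1 (h _)

theorem nontrivial_Ext_obj_iff {R C : Type*} [Ring R] [Category C] [Abelian C] [Linear R C]
    [EnoughProjectives C] [HasExt C] (X Y : C) (n : ℕ) :
    Nontrivial (((Ext R C n).obj (op X)).obj Y) ↔ Nontrivial (Abelian.Ext X Y n) := by
  let P := projectiveResolution X
  rw [← not_iff_not, not_nontrivial_iff_subsingleton, not_nontrivial_iff_subsingleton,
    (P.isoExt (R := R) n Y).toLinearEquiv.toEquiv.subsingleton_congr,
    ← ModuleCat.isZero_iff_subsingleton, ← HomologicalComplex.exactAt_iff_isZero_homology,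
    exactAt_linearYonedaObj_iff]

end Ext

section Split

variable {N B : Type*} [AddCommGroup N] [AddCommGroup B] {q : N →+ B} {u : B →+ N}
  {v : N →+ B} {ρ : B →+ N}

theorem surjective_comp_comm_of_split (hvu : v.comp u = .id B)
    (hsplit : ρ.comp q + u.comp v = .id N) :
    Function.Surjective (u.comp q) ↔ Function.Surjective (q.comp u) := by
  have hvu' : ∀ b, v (u b) = b := DFunLike.congr_fun hvu
  have hsplit' : ∀ z, ρ (q z) + u (v z) = z := DFunLike.congr_fun hsplit
  refine ⟨fun h b => ?_, fun h z => ?_⟩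
  · obtain ⟨z, hz⟩ := h (u b)
    obtain ⟨z', rfl⟩ := h z
    refine ⟨q z', ?_⟩
    rw [← hvu' b, ← hz]
    exact (hvu' _).symm
  · have hρ : ∀ b, ρ b = 0 := fun b => by
      obtain ⟨b', rfl⟩ := h b
      simpa [hvu'] using hsplit' (u b')
    obtain ⟨b, hb⟩ := h (v z)
    refine ⟨u b, ?_⟩
    rw [← hsplit' z, hρ, zero_add, ← hb]
    rfl

theorem injective_comp_comm_of_split (hvu : v.comp u = .id B)
    (hsplit : ρ.comp q + u.comp v = .id N) :
    Function.Injective (u.comp q) ↔ Function.Injective (q.comp u) := by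
  have hu : Function.Injective u := Function.LeftInverse.injective (DFunLike.congr_fun hvu)
  refine ⟨fun h => ?_, fun h => ?_⟩
  · have hq : Function.Injective q := .of_comp (f := u) h
    exact hq.comp hu
  rw [injective_iff_map_eq_zero] at h ⊢
  intro z hz
  have hq : q z = 0 := (map_eq_zero_iff u hu).1 hz
  have hz' : u (v z) = z := by simpa [hq] using DFunLike.congr_fun hsplit z
  rw [← hz', h (v z) ((congrArg q hz').trans hq), map_zero]

end Split

section CharMap

open TensorProduct

variable {A R N : Type*} [CommRing A] [CommRing R] [Algebra A R] [AddCommGroup N] [Module A N]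
  [Module R N] [IsScalarTower A R N] (x : R)

variable (A N) in
/-- Multiplication by `x` as an `A`-linear endomorphism. -/
def smulLinear : N →ₗ[A] N := (LinearMap.lsmul R N x).restrictScalars A

variable (A N) in
/-- The characteristic map `x ⊗ 1 - 1 ⊗ x`. If `R = A[x]` is a polynomial ring, it embeds
`R ⊗[A] N` into itself with cokernel `N`. -/
def charMap : R ⊗[A] N →ₗ[R] R ⊗[A] N := x • .id - (smulLinear A N x).baseChange R

theorem charMap_pow_tmul (k : ℕ) (n : N) :
    charMap A N x ((x ^ k : R) ⊗ₜ[A] n) =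
      (x ^ (k + 1) : R) ⊗ₜ[A] n - (x ^ k : R) ⊗ₜ[A] (x • n) := by
  simp [charMap, smulLinear, smul_tmul', pow_succ']

variable {x} (b : Module.Basis ℕ A R)

theorem sub_one_tmul_mem_range_charMap (hb : ∀ k, b k = x ^ k) (t : R ⊗[A] N) :
    t - (1 : R) ⊗ₜ[A] LinearMap.liftBaseChange R (.id : N →ₗ[A] N) t ∈
      LinearMap.range (charMap A N x) := by
  have pow_tmul_mem (k : ℕ) : ∀ n : N, (x ^ k) ⊗ₜ[A] n - (1 : R) ⊗ₜ[A] (x ^ k • n) ∈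
      LinearMap.range (charMap A N x) := by
    induction k with
    | zero => simp
    | succ k ih =>
      intro n
      have := add_mem (LinearMap.mem_range_self (charMap A N x) ((x ^ k : R) ⊗ₜ[A] n)) (ih (x • n))
      rwa [charMap_pow_tmul, sub_add_sub_cancel, smul_smul, ← pow_succ] at this
  rw [← (equivFinsuppOfBasisLeft (N := N) b).symm_apply_apply t,
    equivFinsuppOfBasisLeft_symm_apply]
  simp only [Finsupp.sum, map_sum, tmul_sum, ← Finset.sum_sub_distrib]
  exact sum_mem fun k _ => by simpa [hb] using pow_tmul_mem k _

theorem exact_charMap_liftBaseChange (hb : ∀ k, b k = x ^ k) :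
    Function.Exact (charMap A N x) (LinearMap.liftBaseChange R (.id : N →ₗ[A] N)) := by
  refine fun t => ⟨fun ht => ?_, ?_⟩
  · simpa [ht] using sub_one_tmul_mem_range_charMap b hb t
  · rintro ⟨t, rfl⟩
    induction t with
    | zero => simp
    | add s t hs ht => rw [map_add, map_add, hs, ht, add_zero]
    | tmul r n => simp [charMap, smulLinear, smul_smul, smul_tmul', mul_comm]

theorem equivFinsuppOfBasisLeft_charMap_succ (hb : ∀ k, b k = x ^ k) (t : R ⊗[A] N) (k : ℕ) :
    equivFinsuppOfBasisLeft b (charMap A N x t) (k + 1) =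
      equivFinsuppOfBasisLeft b t k - x • equivFinsuppOfBasisLeft b t (k + 1) := by
  have pow_tmul (j : ℕ) (n : N) :
      equivFinsuppOfBasisLeft b ((x ^ j : R) ⊗ₜ[A] n) = Finsupp.single j n := by
    rw [← LinearEquiv.eq_symm_apply]
    simp [equivFinsuppOfBasisLeft_symm_apply, hb]
  obtain ⟨f, rfl⟩ := (equivFinsuppOfBasisLeft (N := N) b).symm.surjective t
  induction f using Finsupp.induction_linear with
  | zero => simp
  | add f g hf hg =>
    simp only [map_add, Finsupp.add_apply, hf, hg, smul_add]
    abel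
  | single j n =>
    rw [LinearEquiv.apply_symm_apply, ← pow_tmul, LinearEquiv.symm_apply_apply, charMap_pow_tmul,
      map_sub, pow_tmul, pow_tmul, pow_tmul]
    simp [Finsupp.single_apply]

theorem injective_charMap (hb : ∀ k, b k = x ^ k) : Function.Injective (charMap A N x) := by
  rw [injective_iff_map_eq_zero]
  intro t ht
  let e := equivFinsuppOfBasisLeft (N := N) b
  have hrec : ∀ m k, e t k = x ^ m • e t (k + m) := by
    intro m k
    induction m with
    | zero => simp
    | succ m ih =>
      have := equivFinsuppOfBasisLeft_charMap_succ b hb t (k + m)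
      rw [ht, map_zero, Finsupp.zero_apply, eq_comm, sub_eq_zero] at this
      rw [ih, this, smul_smul, ← pow_succ, add_assoc]
  rw [← e.map_eq_zero_iff]
  ext k
  obtain ⟨m, hm⟩ := (e t).support.bddAbove
  have hzero : e t (k + (m + 1)) = 0 := Finsupp.notMem_support_iff.1 fun h => by
    have := hm h
    omega
  rw [hrec (m + 1) k, hzero, smul_zero, Finsupp.zero_apply]

end CharMap

section ExtBaseChange

open TensorProduct Abelian

universe u

variable {A R : Type u} [CommRing A] [CommRing R] [Algebra A R]
variable {M N P : Type u} [AddCommGroup M] [Module A M] [AddCommGroup N] [Module A N]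
  [AddCommGroup P] [Module A P]

/-- The map induced on `Ext^n_R(X, R ⊗_A -)` by an `A`-linear map. -/
def extBaseChange (X : ModuleCat.{u} R) (n : ℕ) (f : M →ₗ[A] N) :
    Ext X (ModuleCat.of R (R ⊗[A] M)) n →+ Ext X (ModuleCat.of R (R ⊗[A] N)) n :=
  (Ext.mk₀ (ModuleCat.ofHom (f.baseChange R))).postcomp X (add_zero n)

section

variable (X : ModuleCat.{u} R) (n : ℕ)

theorem extBaseChange_id : extBaseChange X n (.id : M →ₗ[A] M) = .id _ := by
  ext e
  simp [extBaseChange]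

theorem extBaseChange_comp (g : N →ₗ[A] P) (f : M →ₗ[A] N) :
    extBaseChange X n (g ∘ₗ f) = (extBaseChange X n g).comp (extBaseChange X n f) := by
  ext e
  simp [extBaseChange, LinearMap.baseChange_comp]

theorem extBaseChange_add (f g : M →ₗ[A] N) :
    extBaseChange X n (f + g) = extBaseChange X n f + extBaseChange X n g := by
  ext e
  simp [extBaseChange, LinearMap.baseChange_add, Ext.mk₀_add]

end

variable [Module R N] [IsScalarTower A R N]

variable (A N) in
/-- The sequence `0 → R ⊗[A] N → R ⊗[A] N → N → 0` of the characteristic map of `x`. -/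
abbrev charComplex (x : R) (b : Module.Basis ℕ A R) (hb : ∀ k, b k = x ^ k) :
    ShortComplex (ModuleCat.{u} R) :=
  .mk (ModuleCat.ofHom (charMap A N x))
    (ModuleCat.ofHom (LinearMap.liftBaseChange R (.id : N →ₗ[A] N)))
    (ModuleCat.hom_ext (exact_charMap_liftBaseChange b hb).linearMap_comp_eq_zero)

theorem shortExact_charComplex {x : R} (b : Module.Basis ℕ A R) (hb : ∀ k, b k = x ^ k) :
    (charComplex A N x b hb).ShortExact where
  exact := (ShortComplex.ShortExact.moduleCat_exact_iff_function_exact _).2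
    (exact_charMap_liftBaseChange b hb)
  mono_f := (ModuleCat.mono_iff_injective _).2 (injective_charMap b hb)
  epi_g := (ModuleCat.epi_iff_surjective _).2 fun n => ⟨(1 : R) ⊗ₜ[A] n, by simp⟩

theorem comp_mk₀_charMap {X : ModuleCat.{u} R} {x : R} (hX : ∀ z : X, x • z = 0) (n : ℕ)
    (e : Ext X (ModuleCat.of R (R ⊗[A] N)) n) :
    e.comp (Ext.mk₀ (ModuleCat.ofHom (charMap A N x))) (add_zero n) =
      -extBaseChange X n (smulLinear A N x) e := by
  have hx : x • 𝟙 X = 0 := ModuleCat.hom_ext (LinearMap.ext hX)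
  have hxe : x • e = 0 := by
    rw [← Ext.mk₀_id_comp e, ← Ext.smul_comp, ← Ext.mk₀_smul, hx, Ext.mk₀_zero, Ext.zero_comp]
  have hchar : ModuleCat.ofHom (charMap A N x) =
      x • 𝟙 _ + -ModuleCat.ofHom ((smulLinear A N x).baseChange R) :=
    ModuleCat.hom_ext (by simpa [charMap] using sub_eq_add_neg _ _)
  rw [hchar, Ext.mk₀_add, Ext.comp_add, ← Ext.smul_eq_comp_mk₀, hxe, zero_add, Ext.mk₀_neg,
    Ext.comp_neg]
  rfl

-- Multiplication by `x` kills `Ext X`, so on the long exact sequence of `charComplex` the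
-- characteristic map acts as minus the map induced by `x : N → N`.
theorem subsingleton_ext_iff_surjective_and_injective {X : ModuleCat.{u} R} {x : R}
    (hX : ∀ z : X, x • z = 0) (b : Module.Basis ℕ A R) (hb : ∀ k, b k = x ^ k) (n : ℕ) :
    Subsingleton (Ext X (ModuleCat.of R N) n) ↔
      Function.Surjective (extBaseChange X n (smulLinear A N x)) ∧
        Function.Injective (extBaseChange X (n + 1) (smulLinear A N x)) := by
  have hS := shortExact_charComplex (N := N) b hb
  rw [injective_iff_map_eq_zero]
  refine ⟨fun h => ⟨fun e => ?_, fun e he => ?_⟩, fun ⟨hsurj, hinj⟩ => ?_⟩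
  · obtain ⟨e', he'⟩ := Ext.covariant_sequence_exact₂ X hS e (Subsingleton.elim _ _)
    exact ⟨-e', by rw [map_neg, ← he', ← comp_mk₀_charMap hX]⟩
  · obtain ⟨e', rfl⟩ := Ext.covariant_sequence_exact₁ X hS e
      (by rw [comp_mk₀_charMap hX, he, neg_zero]) rfl
    rw [Subsingleton.elim e' 0, Ext.zero_comp]
  · refine subsingleton_of_forall_eq 0 fun e => ?_
    have hδ : e.comp hS.extClass rfl = 0 := hinj _ <| by
      rw [← neg_eq_zero, ← comp_mk₀_charMap hX]
      exact (Ext.comp_assoc_of_third_deg_zero _ _ _ _).trans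
        ((congrArg (e.comp · _) hS.extClass_comp).trans (Ext.comp_zero _ _ _ _ _))
    obtain ⟨e', rfl⟩ := Ext.covariant_sequence_exact₃ X hS e rfl hδ
    obtain ⟨e'', rfl⟩ := hsurj e'
    have hzero := (charComplex A N x b hb).zero
    rw [← neg_neg (extBaseChange _ _ _ e''), ← comp_mk₀_charMap hX, Ext.neg_comp, neg_eq_zero,
      Ext.comp_assoc_of_third_deg_zero, Ext.mk₀_comp_mk₀]
    exact (congrArg (fun f => e''.comp (Ext.mk₀ f) (add_zero n)) hzero).trans (by simp)

end ExtBaseChange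

section XBasis

variable {K σ : Type*} [CommRing K] (i : σ)

variable (K) in
/-- The polynomials in the variables other than `x_i`; the whole polynomial ring is regarded as a
free module over them, with basis the powers of `x_i`. -/
abbrev CoeffRing : Subalgebra K (MvPolynomial σ K) := supported K {i}ᶜ

theorem linearIndependent_X_pow :
    LinearIndependent (CoeffRing K i) (fun k : ℕ => (X i ^ k : MvPolynomial σ K)) := by
  have hX : Transcendental (CoeffRing K i) (X i : MvPolynomial σ K) :=
    transcendental_supported_X K (Set.notMem_compl_iff.2 rfl)
  simpa [Function.comp_def] using! (Polynomial.basisMonomials _).linearIndependent.map_injOn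
    (Polynomial.aeval (R := CoeffRing K i) (X i : MvPolynomial σ K)).toLinearMap
    (transcendental_iff_injective.1 hX).injOn

theorem adjoin_X : Algebra.adjoin (CoeffRing K i) {(X i : MvPolynomial σ K)} = ⊤ := by
  refine eq_top_iff.2 fun p _ => ?_
  induction p using MvPolynomial.induction_on with
  | C r => exact Subalgebra.algebraMap_mem _ (algebraMap K (CoeffRing K i) r)
  | add p q hp hq => exact add_mem (hp trivial) (hq trivial)
  | mul_X p j hp =>
    refine mul_mem (hp trivial) ?_
    obtain rfl | hj := eq_or_ne j i
    · exact Algebra.subset_adjoin rfl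
    · exact Subalgebra.algebraMap_mem _ (⟨X j, Algebra.subset_adjoin ⟨j, hj, rfl⟩⟩ : CoeffRing K i)

theorem span_range_X_pow :
    Submodule.span (CoeffRing K i) (Set.range fun k : ℕ => (X i ^ k : MvPolynomial σ K)) = ⊤ := by
  rw [← Algebra.top_toSubmodule, ← adjoin_X, Algebra.adjoin_eq_span, ← Submonoid.powers_eq_closure]
  rfl

variable (K) in
/-- The basis `1, x_i, x_i², …` of the polynomial ring over the polynomials not involving `x_i`. -/
def xBasis : Module.Basis ℕ (CoeffRing K i) (MvPolynomial σ K) :=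
  .mk (linearIndependent_X_pow i) (span_range_X_pow i).ge

theorem xBasis_apply (k : ℕ) : xBasis K i k = X i ^ k := Module.Basis.mk_apply _ _ _

/-- The coefficient of `x_i ^ k`, a polynomial in the other variables. -/
def xCoeff (k : ℕ) : MvPolynomial σ K →ₗ[CoeffRing K i] CoeffRing K i := (xBasis K i).coord k

/-- The coefficientwise `x_i`-shift: `x_i ^ (k + 1) ↦ x_i ^ k` and `1 ↦ 0`. -/
def divX : MvPolynomial σ K →ₗ[CoeffRing K i] MvPolynomial σ K :=
  (xBasis K i).constr ℕ fun
    | 0 => 0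
    | k + 1 => X i ^ k

variable {i}

theorem xCoeff_X_pow (k l : ℕ) :
    xCoeff i k (X i ^ l : MvPolynomial σ K) = if l = k then 1 else 0 := by
  rw [← xBasis_apply, xCoeff, Module.Basis.coord_apply, Module.Basis.repr_self,
    Finsupp.single_apply]

theorem xCoeff_X_pow_mul (k l : ℕ) (p : MvPolynomial σ K) :
    xCoeff i k (X i ^ l * p) = if l ≤ k then xCoeff i (k - l) p else 0 := by
  suffices xCoeff i k ∘ₗ LinearMap.mulLeft (CoeffRing K i) (X i ^ l : MvPolynomial σ K) =
      if l ≤ k then xCoeff i (k - l) else 0 by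
    have := DFunLike.congr_fun this p
    split_ifs at this ⊢ <;> exact this
  refine (xBasis K i).ext fun j => ?_
  rw [xBasis_apply, LinearMap.comp_apply, LinearMap.mulLeft_apply, ← pow_add, xCoeff_X_pow]
  obtain hl | hl := le_or_gt l k
  · simp [hl, xCoeff_X_pow, eq_tsub_iff_add_eq_of_le, add_comm]
  · rw [if_neg hl.not_ge, if_neg (by omega), LinearMap.zero_apply]

theorem xCoeff_coe (k : ℕ) (a : CoeffRing K i) :
    xCoeff i k (a : MvPolynomial σ K) = if k = 0 then a else 0 := by
  have h : (a : MvPolynomial σ K) = a • X i ^ 0 := by simp [Algebra.smul_def]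
  rw [h, map_smul, xCoeff_X_pow]
  simp [eq_comm]

theorem divX_one : divX i (1 : MvPolynomial σ K) = 0 := by
  rw [← pow_zero (X i), ← xBasis_apply, divX, Module.Basis.constr_basis]

theorem divX_X_pow_succ (k : ℕ) : divX i (X i ^ (k + 1) : MvPolynomial σ K) = X i ^ k := by
  rw [← xBasis_apply, divX, Module.Basis.constr_basis]

theorem divX_X_mul (p : MvPolynomial σ K) : divX i (X i * p) = p := by
  suffices divX i ∘ₗ LinearMap.mulLeft (CoeffRing K i) (X i : MvPolynomial σ K) = .id from
    DFunLike.congr_fun this p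
  refine (xBasis K i).ext fun k => ?_
  simp [xBasis_apply, ← pow_succ', divX_X_pow_succ]

theorem xCoeff_zero_add_X_mul_divX (p : MvPolynomial σ K) :
    (xCoeff i 0 p : MvPolynomial σ K) + X i * divX i p = p := by
  suffices Algebra.linearMap _ _ ∘ₗ xCoeff i 0 +
      LinearMap.mulLeft (CoeffRing K i) (X i : MvPolynomial σ K) ∘ₗ divX i = .id from
    DFunLike.congr_fun this p
  refine (xBasis K i).ext fun k => ?_
  rw [xBasis_apply]
  cases k with
  | zero =>
    have h : xCoeff i 0 (1 : MvPolynomial σ K) = 1 := by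
      simpa using xCoeff_X_pow (K := K) (i := i) 0 0
    simp [h, divX_one]
  | succ k => simp [xCoeff_X_pow, divX_X_pow_succ, ← pow_succ']

theorem exists_sum_X_pow_mul_xCoeff (p : MvPolynomial σ K) :
    ∃ T₀, ∀ T ≥ T₀, ∑ k ∈ Finset.range T, X i ^ k * (xCoeff i k p : MvPolynomial σ K) = p := by
  obtain ⟨m, hm⟩ := ((xBasis K i).repr p).support.bddAbove
  refine ⟨m + 1, fun T hT => ?_⟩
  conv_rhs => rw [← (xBasis K i).linearCombination_repr p, Finsupp.linearCombination_apply]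
  rw [Finsupp.sum_of_support_subset (s := Finset.range T)]
  · simp [xBasis_apply, xCoeff, Algebra.smul_def, mul_comm]
  · intro k hk
    have := hm hk
    rw [Finset.mem_range]
    omega
  · simp

/-- Homogeneity of an ideal with respect to the degree in the variable `x_i`: the ideal contains
the components of `x_i`-degree `k` of its elements. -/
def IsXHomogeneous (i : σ) (I : Ideal (MvPolynomial σ K)) : Prop :=
  ∀ k, ∀ p ∈ I, X i ^ k * (xCoeff i k p : MvPolynomial σ K) ∈ I

theorem IsXHomogeneous.mem_iff {I : Ideal (MvPolynomial σ K)} (hI : IsXHomogeneous i I)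
    {p : MvPolynomial σ K} : p ∈ I ↔ ∀ k, X i ^ k * (xCoeff i k p : MvPolynomial σ K) ∈ I := by
  refine ⟨fun hp k => hI k p hp, fun h => ?_⟩
  obtain ⟨T, hT⟩ := exists_sum_X_pow_mul_xCoeff (i := i) p
  rw [← hT T le_rfl]
  exact sum_mem fun k _ => h k

theorem weight_piSingle_one [DecidableEq σ] (d : σ →₀ ℕ) :
    Finsupp.weight (Pi.single i 1 : σ → ℕ) d = d i := by
  rw [Finsupp.weight_apply, Finsupp.sum_eq_single i] <;> simp +contextual

theorem isWeightedHomogeneous_X_pow_mul_coe [DecidableEq σ] (k : ℕ) (a : CoeffRing K i) :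
    IsWeightedHomogeneous (Pi.single i 1) (X i ^ k * (a : MvPolynomial σ K)) k := by
  have ha : IsWeightedHomogeneous (Pi.single i 1) (a : MvPolynomial σ K) 0 := fun d hd => by
    by_contra hi
    rw [weight_piSingle_one, ← ne_eq, ← Finsupp.mem_support_iff] at hi
    exact mem_supported.1 a.2 ((mem_vars_iff_mem_support i).2 ⟨d, mem_support_iff.2 hd, hi⟩) rfl
  simpa using ((isWeightedHomogeneous_X K (Pi.single i 1) i).pow k).mul ha

theorem weightedHomogeneousComponent_piSingle_one [DecidableEq σ] (k : ℕ) (p : MvPolynomial σ K) :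
    weightedHomogeneousComponent (Pi.single i 1) k p =
      X i ^ k * (xCoeff i k p : MvPolynomial σ K) := by
  obtain ⟨T, hT⟩ := exists_sum_X_pow_mul_xCoeff (i := i) p
  have hcomp (l : ℕ) : weightedHomogeneousComponent (Pi.single i 1) k
      (X i ^ l * (xCoeff i l p : MvPolynomial σ K)) =
        if k = l then X i ^ l * (xCoeff i l p : MvPolynomial σ K) else 0 :=
    weightedHomogeneousComponent_of_mem (isWeightedHomogeneous_X_pow_mul_coe l _)
  conv_lhs => rw [← hT (T + k + 1) (by omega), map_sum]
  simp_rw [hcomp, Finset.sum_ite_eq, Finset.mem_range]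
  rw [if_pos (by omega)]

theorem coeff_X_pow_mul_xCoeff (k : ℕ) (p : MvPolynomial σ K) (d : σ →₀ ℕ) :
    coeff d (X i ^ k * (xCoeff i k p : MvPolynomial σ K)) = if d i = k then coeff d p else 0 := by
  classical
  rw [← weightedHomogeneousComponent_piSingle_one, coeff_weightedHomogeneousComponent,
    weight_piSingle_one]

theorem coeff_xCoeff (k : ℕ) (p : MvPolynomial σ K) (d : σ →₀ ℕ) :
    coeff d (xCoeff i k p : MvPolynomial σ K) =
      if d i = 0 then coeff (Finsupp.single i k + d) p else 0 := by
  classical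
  have h := coeff_X_pow_mul_xCoeff (i := i) k p (Finsupp.single i k + d)
  rw [X_pow_eq_monomial, coeff_monomial_mul, one_mul] at h
  simpa using h

attribute [local instance] weightedGradedAlgebra in
theorem isXHomogeneous_of_isHomogeneous [DecidableEq σ] {I : Ideal (MvPolynomial σ K)}
    (hI : I.IsHomogeneous (weightedHomogeneousSubmodule K (Pi.single i 1 : σ → ℕ))) :
    IsXHomogeneous i I := fun k p hp => by
  rw [← weightedHomogeneousComponent_piSingle_one]
  exact weightedHomogeneousComponent_mem_of_mem K _ hI hp k

end XBasis

section Depth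

open TensorProduct Abelian

universe u

variable {A R : Type u} [CommRing A] [CommRing R] [Algebra A R]
  {N B : Type u} [AddCommGroup N] [Module A N] [Module R N] [IsScalarTower A R N]
  [AddCommGroup B] [Module A B] [Module R B] [IsScalarTower A R B]

theorem subsingleton_ext_iff_of_split {X : ModuleCat.{u} R} {x : R} (hX : ∀ z : X, x • z = 0)
    (b : Module.Basis ℕ A R) (hb : ∀ k, b k = x ^ k)
    {q : N →ₗ[A] B} {u : B →ₗ[A] N} {v : N →ₗ[A] B} {ρ : B →ₗ[A] N}
    (huq : u ∘ₗ q = smulLinear A N x) (hqu : q ∘ₗ u = smulLinear A B x)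
    (hvu : v ∘ₗ u = .id) (hsplit : ρ ∘ₗ q + u ∘ₗ v = .id) (n : ℕ) :
    Subsingleton (Ext X (ModuleCat.of R N) n) ↔ Subsingleton (Ext X (ModuleCat.of R B) n) := by
  have hvu' (m : ℕ) : (extBaseChange X m v).comp (extBaseChange X m u) = .id _ := by
    rw [← extBaseChange_comp, hvu, extBaseChange_id]
  have hsplit' (m : ℕ) : (extBaseChange X m ρ).comp (extBaseChange X m q) +
      (extBaseChange X m u).comp (extBaseChange X m v) = .id _ := by
    rw [← extBaseChange_comp, ← extBaseChange_comp, ← extBaseChange_add, hsplit, extBaseChange_id]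
  rw [subsingleton_ext_iff_surjective_and_injective hX b hb,
    subsingleton_ext_iff_surjective_and_injective hX b hb, ← huq, ← hqu]
  simp only [extBaseChange_comp]
  exact and_congr (surjective_comp_comm_of_split (hvu' n) (hsplit' n))
    (injective_comp_comm_of_split (hvu' (n + 1)) (hsplit' (n + 1)))

/-- The `A`-linear map of quotients of an `A`-algebra `R` by ideals induced by an `A`-linear
endomorphism of `R`. -/
def quotMap {I J : Ideal R} (f : R →ₗ[A] R) (h : ∀ p ∈ I, f p ∈ J) : (R ⧸ I) →ₗ[A] (R ⧸ J) :=
  (Submodule.Quotient.restrictScalarsEquiv A J).toLinearMap ∘ₗ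
    (I.restrictScalars A).mapQ (J.restrictScalars A) f h ∘ₗ
      (Submodule.Quotient.restrictScalarsEquiv A I).symm.toLinearMap

theorem subsingleton_ext_quotient_iff {X : ModuleCat.{u} R} {x : R} (hX : ∀ z : X, x • z = 0)
    (b : Module.Basis ℕ A R) (hb : ∀ k, b k = x ^ k) {I J : Ideal R} {d ρ : R →ₗ[A] R}
    (hd : ∀ p, d (x * p) = p) (hρ : ∀ p, ρ p + x * d p = p)
    (hJ : ∀ p, p ∈ J ↔ x * p ∈ I) (hJI : ∀ p ∈ J, ρ p ∈ I) (n : ℕ) :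
    Subsingleton (Ext X (ModuleCat.of R (R ⧸ I)) n) ↔
      Subsingleton (Ext X (ModuleCat.of R (R ⧸ J)) n) := by
  have hIJ : ∀ p ∈ I, p ∈ J := fun p hp => (hJ p).2 (I.mul_mem_left _ hp)
  have hdI : ∀ p ∈ I, d p ∈ J := fun p hp => by
    rw [hJ, ← sub_eq_of_eq_add' (hρ p).symm]
    exact I.sub_mem hp (hJI p (hIJ p hp))
  refine subsingleton_ext_iff_of_split hX b hb (q := quotMap .id hIJ)
    (u := quotMap (LinearMap.mulLeft A x) fun p => (hJ p).1) (v := quotMap d hdI)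
    (ρ := quotMap ρ hJI) ?_ ?_ ?_ ?_ n
  all_goals
    refine LinearMap.ext fun z => ?_
    obtain ⟨p, rfl⟩ := Ideal.Quotient.mk_surjective z
  · rfl
  · rfl
  · exact congrArg _ (hd p)
  · exact congrArg _ (hρ p)

theorem depthQ_eq_of_mem_iff_X_mul_mem {K σ : Type} [Field K] {I J : Ideal (MvPoly K σ)} {i : σ}
    (hJ : ∀ p, p ∈ J ↔ X i * p ∈ I) (hJI : ∀ p ∈ J, (xCoeff i 0 p : MvPoly K σ) ∈ I) :
    depthQ K σ I = depthQ K σ J := by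
  have hX (z : MvPoly K σ ⧸ maxIdeal K σ) : (X i : MvPoly K σ) • z = 0 := by
    obtain ⟨p, rfl⟩ := Ideal.Quotient.mk_surjective z
    exact Ideal.Quotient.eq_zero_iff_mem.2
      (Ideal.mul_mem_right _ _ (Ideal.subset_span (Set.mem_range_self i)))
  have hExt := subsingleton_ext_quotient_iff
    (X := ModuleCat.of (MvPoly K σ) (MvPoly K σ ⧸ maxIdeal K σ)) hX (xBasis K i) (xBasis_apply i)
    (ρ := Algebra.linearMap _ _ ∘ₗ xCoeff i 0) divX_X_mul xCoeff_zero_add_X_mul_divX hJ hJI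
  simp only [depthQ, nontrivial_Ext_obj_iff]
  simp only [← not_subsingleton_iff_nontrivial, hExt]

end Depth

section Homogeneous

variable {K σ α β γ : Type*} [CommRing K]

variable (K σ) in
/-- The homogeneous polynomials of integral degree `e`; these vanish for `e < 0`. -/
abbrev homogPart (e : ℤ) : Submodule K (MvPolynomial σ K) :=
  weightedHomogeneousSubmodule K (1 : σ → ℤ) e

theorem mem_homogPart_iff {e : ℤ} {p : MvPolynomial σ K} :
    p ∈ homogPart K σ e ↔ ∀ d, coeff d p ≠ 0 → (d.degree : ℤ) = e := by
  have hweight (d : σ →₀ ℕ) : Finsupp.weight (1 : σ → ℤ) d = d.degree := by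
    simp [Finsupp.weight_apply, Finsupp.degree_apply, Finsupp.sum]
  simp [IsWeightedHomogeneous, hweight]

theorem weightedHomogeneousComponent_mul_of_mem {M : Type*} [AddCommGroup M]
    {w : σ → M} {q : MvPolynomial σ K} {a : M}
    (hq : q ∈ weightedHomogeneousSubmodule K w a) (e : M) (p : MvPolynomial σ K) :
    weightedHomogeneousComponent w e (p * q) = weightedHomogeneousComponent w (e - a) p * q := by
  classical
  let := weightedGradedAlgebra K w
  have := DirectSum.coe_decompose_mul_add_of_right_mem (weightedHomogeneousSubmodule K w)
    (a := p) (i := e - a) hq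
  rw [sub_add_cancel] at this
  rwa [← weightedDecomposition.decompose'_apply, ← weightedDecomposition.decompose'_apply]

theorem X_pow_mem_homogPart (i : σ) (k : ℕ) : (X i ^ k : MvPolynomial σ K) ∈ homogPart K σ k := by
  simpa using (isWeightedHomogeneous_X K (1 : σ → ℤ) i).pow k

theorem xCoeff_mem_homogPart {i : σ} {e : ℤ} {p : MvPolynomial σ K} (hp : p ∈ homogPart K σ e)
    (k : ℕ) : (xCoeff i k p : MvPolynomial σ K) ∈ homogPart K σ (e - k) := by
  classical
  rw [mem_homogPart_iff] at hp ⊢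
  intro d hd
  rw [coeff_xCoeff] at hd
  have hdeg := hp _ (ite_ne_right_iff.1 hd).2
  rw [map_add, Finsupp.degree_single] at hdeg
  omega

/-- The homogeneous elements of degree `e` of the graded free module `⊕_b R(-dg b)`. -/
def homogVec (dg : β → ℤ) (e : ℤ) : Submodule K (β → MvPolynomial σ K) :=
  Submodule.pi Set.univ fun b => homogPart K σ (e - dg b)

theorem mem_homogVec {dg : β → ℤ} {e : ℤ} {v : β → MvPolynomial σ K} :
    v ∈ homogVec dg e ↔ ∀ b, v b ∈ homogPart K σ (e - dg b) := by
  simp [homogVec]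

theorem single_mem_homogVec [DecidableEq β] {dg : β → ℤ} {e : ℤ} {p : MvPolynomial σ K} {b : β}
    (hp : p ∈ homogPart K σ (e - dg b)) : Pi.single b p ∈ homogVec dg e := by
  refine mem_homogVec.2 fun b' => ?_
  obtain rfl | h := eq_or_ne b' b
  · rwa [Pi.single_eq_same]
  · rw [Pi.single_eq_of_ne h]
    exact zero_mem _

theorem single_one_mem_homogVec [DecidableEq β] (dg : β → ℤ) (b : β) :
    Pi.single b 1 ∈ homogVec (K := K) (σ := σ) dg (dg b) :=
  single_mem_homogVec (by rw [sub_self]; exact isWeightedHomogeneous_one K _)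

/-- A map of graded free modules `⊕_b R(-dg' b) → ⊕_a R(-dg a)` that preserves degrees. -/
def IsGradedMap (dg' : β → ℤ) (dg : α → ℤ)
    (L : (β → MvPolynomial σ K) →ₗ[MvPolynomial σ K] (α → MvPolynomial σ K)) : Prop :=
  ∀ e, ∀ v ∈ homogVec dg' e, L v ∈ homogVec dg e

section

variable {dγ : γ → ℤ} {dβ : β → ℤ} {dα : α → ℤ}
  {L L' : (β → MvPolynomial σ K) →ₗ[MvPolynomial σ K] (α → MvPolynomial σ K)}

theorem IsGradedMap.comp (hL : IsGradedMap dβ dα L)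
    {N : (γ → MvPolynomial σ K) →ₗ[MvPolynomial σ K] (β → MvPolynomial σ K)}
    (hN : IsGradedMap dγ dβ N) : IsGradedMap dγ dα (L ∘ₗ N) :=
  fun e v hv => hL e _ (hN e v hv)

theorem IsGradedMap.sub (hL : IsGradedMap dβ dα L) (hL' : IsGradedMap dβ dα L') :
    IsGradedMap dβ dα (L - L') :=
  fun e v hv => sub_mem (hL e v hv) (hL' e v hv)

theorem isGradedMap_id : IsGradedMap (K := K) (σ := σ) dβ dβ .id := fun _ _ hv => hv

theorem isGradedMap_zero : IsGradedMap (K := K) (σ := σ) dβ dα 0 := fun _ _ _ => zero_mem _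

theorem map_eq_sum_smul_single {R M : Type*} [Semiring R] [AddCommMonoid M] [Module R M]
    [Fintype β] [DecidableEq β] (L : (β → R) →ₗ[R] M) (v : β → R) :
    L v = ∑ b, v b • L (Pi.single b 1) := by
  conv_lhs => rw [← (Pi.basisFun R β).sum_repr v, map_sum]
  simp

variable [Finite β]

theorem isGradedMap_iff_single [DecidableEq β] :
    IsGradedMap dβ dα L ↔ ∀ b, L (Pi.single b 1) ∈ homogVec dα (dβ b) := by
  have := Fintype.ofFinite β
  refine ⟨fun h b => h _ _ (single_one_mem_homogVec dβ b), fun h e v hv => ?_⟩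
  rw [map_eq_sum_smul_single]
  refine sum_mem fun b _ => mem_homogVec.2 fun a => ?_
  have := (mem_homogVec.1 hv b).mul (mem_homogVec.1 (h b) a)
  rwa [sub_add_sub_cancel] at this

theorem IsGradedMap.map_component (hL : IsGradedMap dβ dα L) (e : ℤ) (v : β → MvPolynomial σ K) :
    L (fun b => weightedHomogeneousComponent 1 (e - dβ b) (v b)) =
      fun a => weightedHomogeneousComponent 1 (e - dα a) (L v a) := by
  classical
  have := Fintype.ofFinite β
  funext a
  rw [map_eq_sum_smul_single, map_eq_sum_smul_single L v, Finset.sum_apply, Finset.sum_apply,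
    map_sum]
  refine Finset.sum_congr rfl fun b _ => ?_
  have h := mem_homogVec.1 (isGradedMap_iff_single.1 hL b) a
  rw [Pi.smul_apply, Pi.smul_apply, smul_eq_mul, smul_eq_mul,
    weightedHomogeneousComponent_mul_of_mem h, sub_sub_sub_cancel_right]

theorem exists_isGradedMap_comp_eq [Finite γ] (hL : IsGradedMap dβ dα L)
    {M : (γ → MvPolynomial σ K) →ₗ[MvPolynomial σ K] (α → MvPolynomial σ K)}
    (hM : IsGradedMap dγ dα M) (hLM : LinearMap.range L ≤ LinearMap.range M) :
    ∃ N : (β → MvPolynomial σ K) →ₗ[MvPolynomial σ K] (γ → MvPolynomial σ K),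
      IsGradedMap dβ dγ N ∧ M ∘ₗ N = L := by
  classical
  have := Fintype.ofFinite β
  choose w hw using fun b : β => hLM ⟨Pi.single b 1, rfl⟩
  let u (b : β) (c : γ) := weightedHomogeneousComponent (1 : σ → ℤ) (dβ b - dγ c) (w b c)
  have hMu (b : β) : M (u b) = L (Pi.single b 1) := by
    rw [hM.map_component, hw]
    funext a
    exact (mem_homogVec.1 (isGradedMap_iff_single.1 hL b) a).weightedHomogeneousComponent_same
  have hN (b : β) : Fintype.linearCombination (MvPolynomial σ K) u (Pi.single b 1) = u b := by
    rw [Fintype.linearCombination_apply_single, one_smul]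
  refine ⟨Fintype.linearCombination _ u, isGradedMap_iff_single.2 fun b => ?_,
    (Pi.basisFun _ β).ext fun b => ?_⟩
  · rw [hN]
    exact mem_homogVec.2 fun c => weightedHomogeneousComponent_mem _ _ _
  · rw [Pi.basisFun_apply, LinearMap.comp_apply, hN, hMu]

end

end Homogeneous

section Strand

variable {K σ α β : Type*} [CommRing K] {i : σ}

/-- The vectors supported on the basis elements of `x_i`-degree at most `t`. They are the strand of
`x_i`-degree `t` of the free module whose basis has the `x_i`-degrees `c`, with the powers of `x_i`
stripped off. -/
def degLE (i : σ) (c : β → ℕ) (t : ℕ) : Submodule (CoeffRing K i) (β → CoeffRing K i) :=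
  Submodule.pi {b | t < c b} fun _ => ⊥

theorem mem_degLE {c : β → ℕ} {t : ℕ} {w : β → CoeffRing K i} :
    w ∈ degLE i c t ↔ ∀ b, t < c b → w b = 0 := by
  simp [degLE]

/-- The component of `x_i`-degree `t` of a vector, with the powers of `x_i` stripped off. -/
def xPart (i : σ) (c : β → ℕ) (t : ℕ) :
    (β → MvPolynomial σ K) →ₗ[CoeffRing K i] (β → CoeffRing K i) :=
  LinearMap.pi fun b => if c b ≤ t then xCoeff i (t - c b) ∘ₗ LinearMap.proj b else 0

theorem xPart_apply (c : β → ℕ) (t : ℕ) (v : β → MvPolynomial σ K) (b : β) :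
    xPart i c t v b = if c b ≤ t then xCoeff i (t - c b) (v b) else 0 := by
  rw [xPart, LinearMap.pi_apply]
  split_ifs <;> rfl

theorem xPart_mem_degLE (c : β → ℕ) (t : ℕ) (v : β → MvPolynomial σ K) :
    xPart i c t v ∈ degLE i c t :=
  mem_degLE.2 fun b hb => by rw [xPart_apply, if_neg hb.not_ge]

/-- Putting back the powers of `x_i` that turn a vector into one of `x_i`-degree `t`. -/
def homogenize (c : β → ℕ) (t : ℕ) :
    (β → CoeffRing K i) →ₗ[CoeffRing K i] (β → MvPolynomial σ K) :=
  LinearMap.pi fun b =>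
    LinearMap.mulLeft _ (X i ^ (t - c b)) ∘ₗ Algebra.linearMap _ _ ∘ₗ LinearMap.proj b

theorem homogenize_apply (c : β → ℕ) (t : ℕ) (w : β → CoeffRing K i) (b : β) :
    homogenize c t w b = X i ^ (t - c b) * (w b : MvPolynomial σ K) := rfl

theorem xPart_homogenize {c : β → ℕ} {t : ℕ} {w : β → CoeffRing K i} (hw : w ∈ degLE i c t) :
    xPart i c t (homogenize c t w) = w := by
  funext b
  rw [xPart_apply, homogenize_apply]
  split_ifs with hb
  · simp [xCoeff_X_pow_mul, xCoeff_coe]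
  · exact (mem_degLE.1 hw b (not_le.1 hb)).symm

theorem exists_sum_homogenize_xPart [Finite β] (i : σ) (c : β → ℕ) (v : β → MvPolynomial σ K) :
    ∃ T₀, ∀ T ≥ T₀, ∑ t ∈ Finset.range T, homogenize c t (xPart i c t v) = v := by
  have := Fintype.ofFinite β
  choose T₀ hT₀ using fun b => exists_sum_X_pow_mul_xCoeff (i := i) (v b)
  refine ⟨∑ b, (c b + T₀ b), fun T hT => funext fun b => ?_⟩
  have hb : c b + T₀ b ≤ T := (Finset.single_le_sum (f := fun b => c b + T₀ b)
    (fun _ _ => Nat.zero_le _) (Finset.mem_univ b)).trans hT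
  obtain ⟨T', rfl⟩ := Nat.exists_eq_add_of_le ((Nat.le_add_right _ _).trans hb)
  rw [Finset.sum_apply, Finset.sum_range_add, Finset.sum_eq_zero, zero_add,
    ← hT₀ b T' (by omega)]
  · simp [homogenize_apply, xPart_apply, hT₀ b T' (by omega)]
  · intro t ht
    simp [homogenize_apply, xPart_apply, (Finset.mem_range.1 ht).not_ge]

theorem xPart_smul_homogenize {c : β → ℕ} {t' : ℕ} {w : β → CoeffRing K i}
    (hw : w ∈ degLE i c t') (t : ℕ) (p : MvPolynomial σ K) :
    xPart i c t (p • homogenize c t' w) =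
      (if t' ≤ t then xCoeff i (t - t') p else 0) • w := by
  funext b
  rw [xPart_apply, Pi.smul_apply, Pi.smul_apply, homogenize_apply]
  obtain hb | hb := lt_or_ge t' (c b)
  · simp [mem_degLE.1 hw b hb]
  have hcomm : p • (X i ^ (t' - c b) * (w b : MvPolynomial σ K)) =
      w b • (X i ^ (t' - c b) * p) := by
    rw [Algebra.smul_def (w b), Subalgebra.algebraMap_apply, smul_eq_mul]
    ring
  rw [hcomm, map_smul, xCoeff_X_pow_mul, smul_eq_mul, smul_eq_mul, mul_comm]
  obtain ht | ht := le_or_gt t' t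
  · rw [if_pos (hb.trans ht), if_pos (Nat.sub_le_sub_right ht _), if_pos ht,
      tsub_tsub_tsub_cancel_right hb]
  · rw [if_neg ht.not_ge, zero_mul]
    split_ifs
    · omega
    · exact zero_mul _
    · rfl

variable [Fintype β] {c' : β → ℕ} {c : α → ℕ} {s : β → α → CoeffRing K i}

/-- The map with matrix `x_i ^ (c' b - c a) * s b a`. If the row `s b` lies in
`degLE i c (c' b)`, so that the subtraction is not truncated at nonzero entries, it preserves the
`x_i`-degree when the basis elements are put in the `x_i`-degrees `c'` and `c`. -/
def bigradedMap (c' : β → ℕ) (c : α → ℕ) (s : β → α → CoeffRing K i) :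
    (β → MvPolynomial σ K) →ₗ[MvPolynomial σ K] (α → MvPolynomial σ K) :=
  Fintype.linearCombination _ fun b => homogenize c (c' b) (s b)

theorem bigradedMap_apply (v : β → MvPolynomial σ K) :
    bigradedMap c' c s v = ∑ b, v b • homogenize c (c' b) (s b) := rfl

theorem bigradedMap_single [DecidableEq β] (b : β) :
    bigradedMap c' c s (Pi.single b 1) = homogenize c (c' b) (s b) := by
  rw [bigradedMap, Fintype.linearCombination_apply_single, one_smul]

theorem isGradedMap_bigradedMap {dg' : β → ℤ} {dg : α → ℤ} (hs : ∀ b, s b ∈ degLE i c (c' b))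
    (hdg : ∀ b a, (s b a : MvPolynomial σ K) ∈ homogPart K σ ((dg' b - c' b) - (dg a - c a))) :
    IsGradedMap dg' dg (bigradedMap c' c s) := by
  classical
  refine isGradedMap_iff_single.2 fun b => mem_homogVec.2 fun a => ?_
  rw [bigradedMap_single, homogenize_apply]
  obtain ha | ha := lt_or_ge (c' b) (c a)
  · rw [mem_degLE.1 (hs b) a ha, ZeroMemClass.coe_zero, mul_zero]
    exact zero_mem _
  · have h := (X_pow_mem_homogPart (K := K) i (c' b - c a)).mul (hdg b a)
    have hdeg : ((c' b - c a : ℕ) : ℤ) + (dg' b - c' b - (dg a - c a)) = dg' b - dg a := by omega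
    rwa [hdeg] at h

theorem sum_smul_mem_degLE (hs : ∀ b, s b ∈ degLE i c (c' b)) {t : ℕ} {u : β → CoeffRing K i}
    (hu : u ∈ degLE i c' t) : ∑ b, u b • s b ∈ degLE i c t := by
  refine sum_mem fun b _ => mem_degLE.2 fun a ha => ?_
  obtain hb | hb := lt_or_ge t (c' b)
  · rw [mem_degLE.1 hu b hb, zero_smul, Pi.zero_apply]
  · rw [Pi.smul_apply, mem_degLE.1 (hs b) a (hb.trans_lt ha), smul_zero]

theorem bigradedMap_homogenize (hs : ∀ b, s b ∈ degLE i c (c' b)) {t : ℕ} {u : β → CoeffRing K i}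
    (hu : u ∈ degLE i c' t) :
    bigradedMap c' c s (homogenize c' t u) = homogenize c t (∑ b, u b • s b) := by
  rw [bigradedMap_apply, map_sum]
  refine Finset.sum_congr rfl fun b _ => funext fun a => ?_
  simp only [Pi.smul_apply, homogenize_apply, smul_eq_mul, MulMemClass.coe_mul]
  obtain hb | hb := lt_or_ge t (c' b)
  · simp [mem_degLE.1 hu b hb]
  obtain ha | ha := lt_or_ge (c' b) (c a)
  · simp [mem_degLE.1 (hs b) a ha]
  rw [← tsub_add_tsub_cancel hb ha, pow_add]
  ring

theorem xPart_bigradedMap (hs : ∀ b, s b ∈ degLE i c (c' b)) (t : ℕ) (v : β → MvPolynomial σ K) :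
    xPart i c t (bigradedMap c' c s v) = ∑ b, xPart i c' t v b • s b := by
  simp only [bigradedMap_apply, map_sum, xPart_smul_homogenize (hs _), xPart_apply]

theorem bigradedMap_eq_zero_iff (hs : ∀ b, s b ∈ degLE i c (c' b)) [Finite α]
    {v : β → MvPolynomial σ K} :
    bigradedMap c' c s v = 0 ↔ ∀ t, ∑ b, xPart i c' t v b • s b = 0 := by
  simp only [← xPart_bigradedMap hs]
  refine ⟨fun h t => by rw [h, map_zero], fun h => ?_⟩
  obtain ⟨T, hT⟩ := exists_sum_homogenize_xPart i c (bigradedMap c' c s v)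
  simpa [h] using (hT T le_rfl).symm

theorem mem_range_bigradedMap_iff (hs : ∀ b, s b ∈ degLE i c (c' b)) [Finite α]
    {v : α → MvPolynomial σ K} :
    v ∈ LinearMap.range (bigradedMap c' c s) ↔
      ∀ t, ∃ u ∈ degLE (K := K) i c' t, ∑ b, u b • s b = xPart i c t v := by
  constructor
  · rintro ⟨w, rfl⟩ t
    exact ⟨xPart i c' t w, xPart_mem_degLE _ _ _, (xPart_bigradedMap hs t w).symm⟩
  · intro h
    choose u hu hus using h
    obtain ⟨T, hT⟩ := exists_sum_homogenize_xPart i c v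
    rw [← hT T le_rfl]
    refine sum_mem fun t _ => ⟨homogenize c' t (u t), ?_⟩
    rw [bigradedMap_homogenize hs (hu t), hus]

theorem bigradedMap_homogenize_eq_zero_iff (hs : ∀ b, s b ∈ degLE i c (c' b)) {t : ℕ}
    {u : β → CoeffRing K i} (hu : u ∈ degLE i c' t) :
    bigradedMap c' c s (homogenize c' t u) = 0 ↔ ∑ b, u b • s b = 0 := by
  rw [bigradedMap_homogenize hs hu]
  refine ⟨fun h => ?_, fun h => by rw [h, map_zero]⟩
  rw [← xPart_homogenize (sum_smul_mem_degLE hs hu), h, map_zero]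

theorem homogenize_mem_range_bigradedMap_iff (hs : ∀ b, s b ∈ degLE i c (c' b)) {t : ℕ}
    {w : α → CoeffRing K i} (hw : w ∈ degLE i c t) :
    homogenize c t w ∈ LinearMap.range (bigradedMap c' c s) ↔
      ∃ u ∈ degLE (K := K) i c' t, ∑ b, u b • s b = w := by
  constructor
  · rintro ⟨v, hv⟩
    refine ⟨xPart i c' t v, xPart_mem_degLE _ _ _, ?_⟩
    rw [← xPart_bigradedMap hs, hv, xPart_homogenize hw]
  · rintro ⟨u, hu, rfl⟩
    exact ⟨homogenize c' t u, bigradedMap_homogenize hs hu⟩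

end Strand

section GradedResolution

variable {K σ : Type} [Field K]

theorem homogPart_natCast (e : ℕ) : homogPart K σ e = homogeneousSubmodule σ K e := by
  ext p
  rw [mem_homogPart_iff, mem_homogeneousSubmodule, IsHomogeneous, IsWeightedHomogeneous]
  simp only [Finsupp.degree_eq_weight_one (R := ℕ), Nat.cast_inj]
  rfl

theorem homogPart_of_neg {e : ℤ} (he : e < 0) : homogPart K σ e = ⊥ := by
  refine (Submodule.eq_bot_iff _).2 fun p hp => MvPolynomial.ext _ _ fun d => ?_
  by_contra hd
  have := mem_homogPart_iff.1 hp d hd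
  omega

theorem homogComp_iff {e : ℤ} {p : MvPoly K σ} : HomogComp K σ e p ↔ p ∈ homogPart K σ e := by
  rw [HomogComp]
  split_ifs with he
  · rw [← homogPart_natCast, Int.toNat_of_nonneg he]
  · rw [homogPart_of_neg (not_le.1 he), Submodule.mem_bot]

theorem isHomogVec_iff {m : ℕ} {dg : Fin m → ℤ} {e : ℤ} {v : Fin m → MvPoly K σ} :
    IsHomogVec K σ dg e v ↔ v ∈ homogVec dg e := by
  simp only [IsHomogVec, homogComp_iff, mem_homogVec]

theorem quotComp_eq_map (I : Ideal (MvPoly K σ)) (e : ℤ) :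
    QuotComp K σ I e = (homogPart K σ e).map (Ideal.Quotient.mkₐ K I).toLinearMap := by
  rw [QuotComp]
  split_ifs with he
  · rw [← homogPart_natCast, Int.toNat_of_nonneg he]
  · rw [homogPart_of_neg (not_le.1 he), Submodule.map_bot]

theorem ResBound.of_finite {I : Ideal (MvPoly K σ)} {r : ℤ} {ι : ℕ → Type} [∀ k, Finite (ι k)]
    {dg : ∀ k, ι k → ℤ} (hdg : ∀ k b, dg k b ≤ r + k)
    {D : ∀ k, (ι (k + 1) → MvPoly K σ) →ₗ[MvPoly K σ] (ι k → MvPoly K σ)}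
    (hD : ∀ k, IsGradedMap (dg (k + 1)) (dg k) (D k)) {o : ι 0} (ho : dg 0 o = 0)
    (hexact₀ : Function.Exact (D 0) (I.mkQ ∘ₗ LinearMap.proj o))
    (hexact : ∀ k, Function.Exact (D (k + 1)) (D k)) : ResBound K σ I r := by
  let e (k : ℕ) : ι k ≃ Fin (Nat.card (ι k)) := Finite.equivFin (ι k)
  let E (k : ℕ) := LinearEquiv.funCongrLeft (MvPoly K σ) (MvPoly K σ) (e k)
  have hE {k : ℕ} {d : ℤ} {v : Fin (Nat.card (ι k)) → MvPoly K σ} :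
      IsHomogVec K σ (dg k ∘ (e k).symm) d v ↔ E k v ∈ homogVec (dg k) d := by
    rw [isHomogVec_iff, mem_homogVec, mem_homogVec, ← (e k).forall_congr_right]
    simp [E, LinearMap.funLeft_apply]
  refine ⟨{
    rk k := Nat.card (ι k)
    dg k := dg k ∘ (e k).symm
    dmap k := ((E k).symm.toLinearMap ∘ₗ D k) ∘ₗ (E (k + 1)).toLinearMap
    aug := (I.mkQ ∘ₗ LinearMap.proj o) ∘ₗ (E 0).toLinearMap
    aug_surj := ((Submodule.mkQ_surjective I).comp (LinearMap.proj_surjective o)).comp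
      (E 0).surjective
    exact0 := ?_
    exactS := fun k => ?_
    graded := fun k d v hv => ?_
    aug_graded := fun d v hv => ?_ }, fun k j => ?_⟩
  · refine (Function.Exact.of_ladder_linearEquiv_of_exact (e₁ := (E 1).symm) (e₂ := (E 0).symm)
      (e₃ := .refl _ _) ?_ ?_ hexact₀)
    all_goals ext; simp
  · refine (Function.Exact.of_ladder_linearEquiv_of_exact (e₁ := (E (k + 2)).symm)
      (e₂ := (E (k + 1)).symm) (e₃ := (E k).symm) ?_ ?_ (hexact k))
    all_goals ext; simp
  · rw [hE] at hv ⊢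
    simpa using hD k d _ hv
  · rw [quotComp_eq_map]
    have := mem_homogVec.1 (hE.1 hv) o
    rw [ho, sub_zero] at this
    exact ⟨_, this, rfl⟩
  · exact sub_le_iff_le_add.2 (hdg k ((e k).symm j))

end GradedResolution

section BiRes

variable {K σ : Type} [Field K] {i : σ} {I I' : Ideal (MvPoly K σ)} {r : ℤ}

/-- A resolution of `R/I` by free modules graded by degree and `x_i`-degree, whose twists satisfy
`dg k b - k ≤ r`. The basis elements have `x_i`-degrees `c` and degrees `dg`, the basis element `o`
of the first module is sent to `1`, and the differentials are the maps `bigradedMap` with matrices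
`s`. Exactness is stated in each `x_i`-degree `t` separately. -/
structure BiRes (i : σ) (I : Ideal (MvPoly K σ)) (r : ℤ) where
  ι : ℕ → Type
  fin : ∀ k, Fintype (ι k)
  c : ∀ k, ι k → ℕ
  dg : ∀ k, ι k → ℤ
  bound : ∀ k b, dg k b ≤ r + k
  s : ∀ k, ι (k + 1) → ι k → CoeffRing K i
  mem_degLE : ∀ k b, s k b ∈ degLE i (c k) (c (k + 1) b)
  homog : ∀ k b a,
    (s k b a : MvPoly K σ) ∈ homogPart K σ ((dg (k + 1) b - c (k + 1) b) - (dg k a - c k a))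
  o : ι 0
  c_o : c 0 o = 0
  dg_o : dg 0 o = 0
  exact0 : ∀ t, ∀ w ∈ degLE i (c 0) t,
    X i ^ t * (w o : MvPoly K σ) ∈ I ↔ ∃ u ∈ degLE (K := K) i (c 1) t, ∑ b, u b • s 0 b = w
  exactS : ∀ k t, ∀ w ∈ degLE i (c (k + 1)) t,
    ∑ b, w b • s k b = 0 ↔ ∃ u ∈ degLE (K := K) i (c (k + 2)) t, ∑ b, u b • s (k + 1) b = w

attribute [instance] BiRes.fin

theorem degLE_comp {β : Type*} {φ θ : ℕ → ℕ} (hφθ : GaloisConnection φ θ) (c : β → ℕ) (t : ℕ) :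
    degLE (K := K) i (φ ∘ c) t = degLE i c (θ t) := by
  ext w
  simp only [mem_degLE, Function.comp_apply, ← hφθ.lt_iff_lt]

theorem degLE_mono {β : Type*} (c : β → ℕ) : Monotone (degLE (K := K) i c) :=
  fun _ _ ht _ hw => mem_degLE.2 fun b hb => mem_degLE.1 hw b (ht.trans_lt hb)

/-- Relabelling the `x_i`-degrees of a bigraded resolution along `φ` moves the strand of
`x_i`-degree `θ t` to `x_i`-degree `t`, which turns a resolution of `R/I` into one of any `R/I'`
related to it in the same way. -/
def BiRes.relabel (M : BiRes i I r) {φ θ : ℕ → ℕ} (hφθ : GaloisConnection φ θ) (hφ₀ : φ 0 = 0)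
    {δ : ℤ} (hφ : ∀ c, (φ c : ℤ) ≤ c + δ)
    (hI' : ∀ t (a : CoeffRing K i), X i ^ t * (a : MvPoly K σ) ∈ I' ↔ X i ^ θ t * a.1 ∈ I) :
    BiRes i I' (r + δ) where
  ι := M.ι
  fin := M.fin
  c k := φ ∘ M.c k
  dg k b := M.dg k b - M.c k b + φ (M.c k b)
  bound k b := by linarith [M.bound k b, hφ (M.c k b)]
  s := M.s
  mem_degLE k b := by
    rw [degLE_comp hφθ]
    exact degLE_mono _ (hφθ.le_u_l _) (M.mem_degLE k b)
  homog k b a := by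
    simpa only [Function.comp_apply, add_sub_cancel_right] using M.homog k b a
  o := M.o
  c_o := by rw [Function.comp_apply, M.c_o, hφ₀]
  dg_o := by simp [M.c_o, M.dg_o, hφ₀]
  exact0 t w hw := by
    rw [degLE_comp hφθ] at hw ⊢
    rw [hI', M.exact0 _ w hw]
  exactS k t w hw := by
    rw [degLE_comp hφθ] at hw ⊢
    exact M.exactS k _ w hw

theorem BiRes.exact_bigradedMap (M : BiRes i I r) (k : ℕ) :
    Function.Exact (bigradedMap (M.c (k + 2)) (M.c (k + 1)) (M.s (k + 1)))
      (bigradedMap (M.c (k + 1)) (M.c k) (M.s k)) := fun v => by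
  rw [← LinearMap.coe_range, SetLike.mem_coe, bigradedMap_eq_zero_iff (M.mem_degLE k),
    mem_range_bigradedMap_iff (M.mem_degLE (k + 1))]
  exact forall_congr' fun t => M.exactS k t _ (xPart_mem_degLE _ _ _)

theorem BiRes.exact_bigradedMap_proj (M : BiRes i I r) (hI : IsXHomogeneous i I) :
    Function.Exact (bigradedMap (M.c 1) (M.c 0) (M.s 0)) (I.mkQ ∘ₗ LinearMap.proj M.o) :=
  fun v => by
  rw [← LinearMap.coe_range, SetLike.mem_coe, mem_range_bigradedMap_iff (M.mem_degLE 0),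
    LinearMap.comp_apply, Submodule.mkQ_apply, Submodule.Quotient.mk_eq_zero, LinearMap.proj_apply,
    hI.mem_iff]
  refine forall_congr' fun t => ?_
  rw [← M.exact0 t _ (xPart_mem_degLE _ _ _), xPart_apply, M.c_o, if_pos (Nat.zero_le t),
    Nat.sub_zero]

theorem BiRes.resBound (M : BiRes i I r) (hI : IsXHomogeneous i I) : ResBound K σ I r :=
  .of_finite M.bound (fun k => isGradedMap_bigradedMap (M.mem_degLE k) (M.homog k)) M.dg_o
    (M.exact_bigradedMap_proj hI) M.exact_bigradedMap

end BiRes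

section Comparison

variable {K σ α β ι κ : Type*} [CommRing K]
  {dα : α → ℤ} {dβ : β → ℤ} {dι : ι → ℤ} {dκ : κ → ℤ}
  {W : Submodule (MvPolynomial σ K) (α → MvPolynomial σ K)}
  {Z : Submodule (MvPolynomial σ K) (ι → MvPolynomial σ K)}
  {d : (β → MvPolynomial σ K) →ₗ[MvPolynomial σ K] (α → MvPolynomial σ K)}
  {D : (κ → MvPolynomial σ K) →ₗ[MvPolynomial σ K] (ι → MvPolynomial σ K)}

/-- Degree preserving maps between graded free modules with submodules `Z` and `W` which exhibit `Z`
as a retract of `W`, up to a map `h` of the ambient module into `Z`. They bound the degrees of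
generators of `Z` in terms of those of `W`, and unlike a retraction they can be lifted along
resolutions of `Z` and `W`. -/
structure GradedComparison (dι : ι → ℤ) (Z : Submodule (MvPolynomial σ K) (ι → MvPolynomial σ K))
    (dα : α → ℤ) (W : Submodule (MvPolynomial σ K) (α → MvPolynomial σ K)) where
  f : (ι → MvPolynomial σ K) →ₗ[MvPolynomial σ K] (α → MvPolynomial σ K)
  g : (α → MvPolynomial σ K) →ₗ[MvPolynomial σ K] (ι → MvPolynomial σ K)
  h : (ι → MvPolynomial σ K) →ₗ[MvPolynomial σ K] (ι → MvPolynomial σ K)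
  isGradedMap_f : IsGradedMap dι dα f
  isGradedMap_g : IsGradedMap dα dι g
  isGradedMap_h : IsGradedMap dι dι h
  f_mem : ∀ z ∈ Z, f z ∈ W
  g_mem : ∀ w ∈ W, g w ∈ Z
  h_mem : ∀ v, h v ∈ Z
  g_f_add_h : ∀ z ∈ Z, g (f z) + h z = z

/-- The generators of `Z` provided by a comparison with the range of `d`. -/
def GradedComparison.generators [DecidableEq β] [DecidableEq ι]
    (S : GradedComparison dι Z dα (LinearMap.range d)) : β ⊕ ι → ι → MvPolynomial σ K :=
  Sum.elim (fun b => S.g (d (Pi.single b 1))) fun l => S.h (Pi.single l 1)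

theorem GradedComparison.generators_mem_homogVec [DecidableEq β] [DecidableEq ι]
    (S : GradedComparison dι Z dα (LinearMap.range d)) (hd : IsGradedMap dβ dα d) (j : β ⊕ ι) :
    S.generators j ∈ homogVec dι (Sum.elim dβ dι j) := by
  rcases j with b | l
  · exact S.isGradedMap_g _ _ (hd _ _ (single_one_mem_homogVec dβ b))
  · exact S.isGradedMap_h _ _ (single_one_mem_homogVec dι l)

theorem GradedComparison.span_generators [Finite β] [DecidableEq β] [Finite ι] [DecidableEq ι]
    (S : GradedComparison dι Z dα (LinearMap.range d)) :
    Submodule.span (MvPolynomial σ K) (Set.range S.generators) = Z := by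
  have := Fintype.ofFinite β
  have := Fintype.ofFinite ι
  refine le_antisymm (Submodule.span_le.2 ?_) fun z hz => ?_
  · rintro _ ⟨b | l, rfl⟩
    · exact S.g_mem _ ⟨_, rfl⟩
    · exact S.h_mem _
  · obtain ⟨w, hw⟩ := S.f_mem z hz
    rw [← S.g_f_add_h z hz, ← hw, ← LinearMap.comp_apply, map_eq_sum_smul_single,
      map_eq_sum_smul_single S.h]
    exact add_mem
      (sum_mem fun b _ => Submodule.smul_mem _ _ (Submodule.subset_span ⟨.inl b, rfl⟩))
      (sum_mem fun l _ => Submodule.smul_mem _ _ (Submodule.subset_span ⟨.inr l, rfl⟩))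

theorem GradedComparison.nonempty_ker [Finite β] [Finite ι] [Finite κ]
    (S : GradedComparison dι Z dα (LinearMap.range d)) (hd : IsGradedMap dβ dα d)
    (hD : IsGradedMap dκ dι D) (hZ : LinearMap.range D = Z) :
    Nonempty (GradedComparison dκ (LinearMap.ker D) dβ (LinearMap.ker d)) := by
  subst hZ
  obtain ⟨f', hf', hdf'⟩ := exists_isGradedMap_comp_eq (S.isGradedMap_f.comp hD) hd <| by
    rintro _ ⟨v, rfl⟩
    exact S.f_mem _ ⟨v, rfl⟩
  obtain ⟨g', hg', hDg'⟩ := exists_isGradedMap_comp_eq (S.isGradedMap_g.comp hd) hD <| by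
    rintro _ ⟨v, rfl⟩
    exact S.g_mem _ ⟨v, rfl⟩
  obtain ⟨h', hh', hDh'⟩ := exists_isGradedMap_comp_eq S.isGradedMap_h hD <| by
    rintro _ ⟨v, rfl⟩
    exact S.h_mem v
  have hdf (v) : d (f' v) = S.f (D v) := DFunLike.congr_fun hdf' v
  have hDg (w) : D (g' w) = S.g (d w) := DFunLike.congr_fun hDg' w
  have hDh (v) : D (h' v) = S.h v := DFunLike.congr_fun hDh' v
  have hD_f' (z) (hz : D z = 0) : d (f' z) = 0 := by rw [hdf, hz, map_zero]
  have hd_g' (w) (hw : d w = 0) : D (g' w) = 0 := by rw [hDg, hw, map_zero]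
  have hD_h (v) : D (v - g' (f' v) - h' (D v)) = 0 := by
    rw [map_sub, map_sub, hDg, hdf, hDh, sub_sub, S.g_f_add_h _ ⟨v, rfl⟩, sub_self]
  have hg_f_h (z) (hz : D z = 0) : g' (f' z) + (z - g' (f' z) - h' (D z)) = z := by
    rw [hz, map_zero, sub_zero, add_sub_cancel]
  exact ⟨{
    f := f'
    g := g'
    h := LinearMap.id - g' ∘ₗ f' - h' ∘ₗ D
    isGradedMap_f := hf'
    isGradedMap_g := hg'
    isGradedMap_h := (isGradedMap_id.sub (hg'.comp hf')).sub (hh'.comp hD)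
    f_mem := hD_f'
    g_mem := hd_g'
    h_mem := hD_h
    g_f_add_h := hg_f_h }⟩

end Comparison

section Refine

variable {K σ ι γ κ : Type*} [CommRing K] {i : σ}

theorem xPart_mem_homogPart {dg : ι → ℤ} {e : ℤ} {v : ι → MvPolynomial σ K}
    (hv : v ∈ homogVec dg e) (c : ι → ℕ) (t : ℕ) (a : ι) :
    (xPart i c t v a : MvPolynomial σ K) ∈ homogPart K σ ((e - t) - (dg a - c a)) := by
  rw [xPart_apply]
  split_ifs with ha
  · have h := xCoeff_mem_homogPart (mem_homogVec.1 hv a) (i := i) (t - c a)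
    have hdeg : e - dg a - (t - c a : ℕ) = e - t - (dg a - c a) := by omega
    rwa [hdeg] at h
  · exact zero_mem _

theorem homogenize_xPart_mem_ker_bigradedMap [Fintype κ] {c : ι → ℕ} {c' : κ → ℕ}
    {s : κ → ι → CoeffRing K i} (hs : ∀ b, s b ∈ degLE i c (c' b)) (t : ℕ)
    {z : κ → MvPolynomial σ K} (hz : z ∈ LinearMap.ker (bigradedMap c' c s)) :
    homogenize c' t (xPart i c' t z) ∈ LinearMap.ker (bigradedMap c' c s) := by
  rw [LinearMap.mem_ker] at hz ⊢
  rw [bigradedMap_homogenize hs (xPart_mem_degLE _ _ _), ← xPart_bigradedMap hs, hz, map_zero,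
    map_zero]

theorem exists_range_bigradedMap_eq_span [Fintype γ] [Finite ι] (c : ι → ℕ)
    {y : γ → ι → MvPolynomial σ K}
    (hy : ∀ t, ∀ z ∈ Submodule.span (MvPolynomial σ K) (Set.range y),
      homogenize c t (xPart i c t z) ∈ Submodule.span (MvPolynomial σ K) (Set.range y)) :
    ∃ T : ℕ, LinearMap.range
      (bigradedMap (fun b : γ × Fin T => b.2) c fun b => xPart i c b.2 (y b.1)) =
        Submodule.span (MvPolynomial σ K) (Set.range y) := by
  classical
  choose T₀ hT₀ using fun j => exists_sum_homogenize_xPart i c (y j)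
  obtain ⟨T, hT⟩ := Finite.exists_le T₀
  refine ⟨T, le_antisymm ?_ (Submodule.span_le.2 ?_)⟩
  · rintro _ ⟨v, rfl⟩
    rw [bigradedMap_apply]
    exact sum_mem fun b _ => Submodule.smul_mem _ _ (hy _ _ (Submodule.subset_span ⟨_, rfl⟩))
  · rintro _ ⟨j, rfl⟩
    rw [← hT₀ j T (hT j)]
    exact sum_mem fun t ht =>
      ⟨Pi.single (j, ⟨t, Finset.mem_range.1 ht⟩) 1, bigradedMap_single _⟩

end Refine

section Stage

variable {K σ : Type} [Field K] {i : σ} {I : Ideal (MvPoly K σ)} {r : ℤ} {k : ℕ}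

theorem GradedFreeRes.isGradedMap_dmap (F : GradedFreeRes K σ I) (k : ℕ) :
    IsGradedMap (F.dg (k + 1)) (F.dg k) (F.dmap k) := fun e v hv =>
  isHomogVec_iff.1 (F.graded k e v (isHomogVec_iff.2 hv))

/-- The last free module of a bigraded resolution under construction, together with the submodule
`Z` of relations that the next step has to cover. The comparison with the resolution `F` keeps the
degrees of the generators of `Z` under control. -/
structure RefinementStage (i : σ) (F : GradedFreeRes K σ I) (r : ℤ) (k : ℕ) where
  ι : Type
  fin : Fintype ι
  c : ι → ℕ
  dg : ι → ℤ
  bound : ∀ b, dg b ≤ r + k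
  Z : Submodule (MvPoly K σ) (ι → MvPoly K σ)
  homogenize_xPart_mem : ∀ t, ∀ z ∈ Z, homogenize c t (xPart i c t z) ∈ Z
  comparison : GradedComparison dg Z (F.dg k) (LinearMap.range (F.dmap k))

attribute [instance] RefinementStage.fin

variable {F : GradedFreeRes K σ I}

theorem RefinementStage.exists_succ (hF : ∀ k j, F.dg k j - k ≤ r) (S : RefinementStage i F r k) :
    ∃ (S' : RefinementStage i F r (k + 1)) (s : S'.ι → S.ι → CoeffRing K i),
      (∀ b, s b ∈ degLE i S.c (S'.c b)) ∧
      (∀ b a, (s b a : MvPoly K σ) ∈ homogPart K σ ((S'.dg b - S'.c b) - (S.dg a - S.c a))) ∧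
      LinearMap.range (bigradedMap S'.c S.c s) = S.Z ∧
      LinearMap.ker (bigradedMap S'.c S.c s) = S'.Z := by
  classical
  have hd := F.isGradedMap_dmap k
  let y := S.comparison.generators
  have hy : Submodule.span (MvPoly K σ) (Set.range y) = S.Z := S.comparison.span_generators
  obtain ⟨T, hT⟩ := exists_range_bigradedMap_eq_span S.c (i := i) (y := y)
    (by rw [hy]; exact S.homogenize_xPart_mem)
  let c' (b : (Fin (F.rk (k + 1)) ⊕ S.ι) × Fin T) : ℕ := b.2
  let dg' (b : (Fin (F.rk (k + 1)) ⊕ S.ι) × Fin T) : ℤ := Sum.elim (F.dg (k + 1)) S.dg b.1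
  let s (b : (Fin (F.rk (k + 1)) ⊕ S.ι) × Fin T) := xPart i S.c b.2 (y b.1)
  have hs (b) : s b ∈ degLE i S.c (c' b) := xPart_mem_degLE _ _ _
  have hhomog (b a) : (s b a : MvPoly K σ) ∈ homogPart K σ ((dg' b - c' b) - (S.dg a - S.c a)) :=
    xPart_mem_homogPart (S.comparison.generators_mem_homogVec hd b.1) S.c b.2 a
  have hrange : LinearMap.range (bigradedMap c' S.c s) = S.Z := hT.trans hy
  have hexact : LinearMap.ker (F.dmap k) = LinearMap.range (F.dmap (k + 1)) :=
    (F.exactS k).linearMap_ker_eq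
  obtain ⟨comparison⟩ := S.comparison.nonempty_ker hd (isGradedMap_bigradedMap hs hhomog) hrange
  rw [hexact] at comparison
  refine ⟨{
    ι := (Fin (F.rk (k + 1)) ⊕ S.ι) × Fin T
    fin := inferInstance
    c := c'
    dg := dg'
    bound := fun ⟨j, _⟩ => ?_
    Z := LinearMap.ker (bigradedMap c' S.c s)
    homogenize_xPart_mem := fun t z hz => homogenize_xPart_mem_ker_bigradedMap hs t hz
    comparison }, s, hs, hhomog, hrange, rfl⟩
  rcases j with j | l
  · exact sub_le_iff_le_add.1 (hF (k + 1) j)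
  · have := S.bound l
    change S.dg l ≤ _
    push_cast
    linarith

theorem GradedFreeRes.exists_isGradedMap_mkQ_eq_aug (F : GradedFreeRes K σ I) :
    ∃ g : (Fin (F.rk 0) → MvPoly K σ) →ₗ[MvPoly K σ] (Unit → MvPoly K σ),
      IsGradedMap (F.dg 0) 0 g ∧ ∀ w, I.mkQ (g w ()) = F.aug w := by
  have haug (j) : F.aug (Pi.single j 1) ∈
      (homogPart K σ (F.dg 0 j)).map (Ideal.Quotient.mkₐ K I).toLinearMap := by
    rw [← quotComp_eq_map]
    exact F.aug_graded _ _ (isHomogVec_iff.2 (single_one_mem_homogVec _ j))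
  choose p hp hpaug using haug
  have hsingle (j) : Fintype.linearCombination (MvPoly K σ) (fun j (_ : Unit) => p j)
      (Pi.single j 1) = fun _ => p j := by
    rw [Fintype.linearCombination_apply_single, one_smul]
  refine ⟨Fintype.linearCombination _ fun j _ => p j, isGradedMap_iff_single.2 fun j => ?_,
    fun w => ?_⟩
  · rw [hsingle]
    exact mem_homogVec.2 fun _ => by simpa using hp j
  · suffices (I.mkQ ∘ₗ LinearMap.proj ()) ∘ₗ Fintype.linearCombination _ (fun j _ => p j) = F.aug
      from DFunLike.congr_fun this w
    refine (Pi.basisFun _ _).ext fun j => ?_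
    rw [Pi.basisFun_apply, LinearMap.comp_apply, hsingle]
    exact hpaug j

theorem eq_C_of_mem_homogPart_zero {p : MvPoly K σ} (hp : p ∈ homogPart K σ 0) :
    p = C (constantCoeff p) := by
  classical
  refine MvPolynomial.ext _ _ fun d => ?_
  rw [coeff_C, constantCoeff_eq]
  split_ifs with hd
  · rw [hd]
  · by_contra hne
    have hdeg : d.degree = 0 := by exact_mod_cast mem_homogPart_iff.1 hp d hne
    exact hd ((Finsupp.degree_eq_zero_iff d).1 hdeg).symm

theorem GradedFreeRes.exists_constantCoeff_ne_zero (F : GradedFreeRes K σ I)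
    (hI : ∀ p ∈ I, constantCoeff p = 0)
    {g : (Fin (F.rk 0) → MvPoly K σ) →ₗ[MvPoly K σ] (Unit → MvPoly K σ)}
    (hg : ∀ w, I.mkQ (g w ()) = F.aug w) :
    ∃ j, constantCoeff (g (Pi.single j 1) ()) ≠ 0 := by
  obtain ⟨u, hu⟩ := F.aug_surj (I.mkQ 1)
  rw [← hg, ← sub_eq_zero, ← map_sub, Submodule.mkQ_apply, Submodule.Quotient.mk_eq_zero] at hu
  by_contra! h
  have := hI _ hu
  rw [map_eq_sum_smul_single g u] at this
  simp [h] at this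

theorem GradedFreeRes.nonempty_comparison (F : GradedFreeRes K σ I)
    (hI : ∀ p ∈ I, constantCoeff p = 0) :
    (∃ j, F.dg 0 j = 0) ∧ Nonempty (GradedComparison (0 : Unit → ℤ)
      (Submodule.comap (LinearMap.proj ()) I) (F.dg 0) (LinearMap.range (F.dmap 0))) := by
  obtain ⟨g, hg, hgaug⟩ := F.exists_isGradedMap_mkQ_eq_aug
  obtain ⟨j, hj⟩ := F.exists_constantCoeff_ne_zero hI hgaug
  have hgj := mem_homogVec.1 (isGradedMap_iff_single.1 hg j) ()
  rw [Pi.zero_apply, sub_zero] at hgj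
  have hdg : F.dg 0 j = 0 := by simpa using (mem_homogPart_iff.1 hgj 0 hj).symm
  set a := constantCoeff (g (Pi.single j 1) ())
  have hga : g (Pi.single j 1) () = C a := eq_C_of_mem_homogPart_zero (hdg ▸ hgj)
  let f : (Unit → MvPoly K σ) →ₗ[MvPoly K σ] (Fin (F.rk 0) → MvPoly K σ) :=
    Fintype.linearCombination _ fun _ => Pi.single j (C a⁻¹)
  have hg_single : g (Pi.single j (C a⁻¹)) () = 1 := by
    rw [← mul_one (C a⁻¹), ← smul_eq_mul, Pi.single_smul, map_smul, Pi.smul_apply, hga, smul_eq_mul,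
      ← C_mul, inv_mul_cancel₀ hj, C_1]
  have hgf (m) : g (f m) = m := funext fun _ => by
    simp [f, Fintype.linearCombination_apply, hg_single]
  have hf : IsGradedMap 0 (F.dg 0) f := isGradedMap_iff_single.2 fun _ => by
    rw [Fintype.linearCombination_apply_single, one_smul]
    exact single_mem_homogVec (by simpa [hdg] using isWeightedHomogeneous_C (1 : σ → ℤ) a⁻¹)
  have hrange (w) : w ∈ LinearMap.range (F.dmap 0) ↔ g w () ∈ I := by
    rw [← F.exact0.linearMap_ker_eq, LinearMap.mem_ker, ← hgaug, Submodule.mkQ_apply,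
      Submodule.Quotient.mk_eq_zero]
  exact ⟨⟨j, hdg⟩, ⟨{
    f := f
    g := g
    h := 0
    isGradedMap_f := hf
    isGradedMap_g := hg
    isGradedMap_h := isGradedMap_zero
    f_mem := fun m hm => by rw [hrange, hgf]; exact hm
    g_mem := fun w => (hrange w).1
    h_mem := fun _ => zero_mem _
    g_f_add_h := fun m _ => by rw [hgf, LinearMap.zero_apply, add_zero] }⟩⟩

theorem RefinementStage.exists_zero (hF : ∀ k j, F.dg k j - k ≤ r) (hI : IsXHomogeneous i I)
    (hI₀ : ∀ p ∈ I, constantCoeff p = 0) :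
    ∃ (S : RefinementStage i F r 0) (o : S.ι), S.c o = 0 ∧ S.dg o = 0 ∧
      ∀ v, v ∈ S.Z ↔ v o ∈ I := by
  obtain ⟨⟨j, hj⟩, ⟨comparison⟩⟩ := F.nonempty_comparison hI₀
  have hr := hF 0 j
  refine ⟨{
    ι := Unit
    fin := inferInstance
    c := 0
    dg := 0
    bound := fun _ => by simpa [hj] using hr
    Z := _
    homogenize_xPart_mem := fun t z hz => ?_
    comparison }, (), rfl, rfl, fun _ => Iff.rfl⟩
  simpa [homogenize_apply, xPart_apply] using hI t _ hz

theorem ResBound.nonempty_biRes (h : ResBound K σ I r) (hI : IsXHomogeneous i I)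
    (hI₀ : ∀ p ∈ I, constantCoeff p = 0) : Nonempty (BiRes i I r) := by
  obtain ⟨F, hF⟩ := h
  obtain ⟨S₀, o, hc, hdg, hZ₀⟩ := RefinementStage.exists_zero hF hI hI₀
  choose next s hs hhomog hrange hker using
    fun k (S : RefinementStage i F r k) => S.exists_succ hF
  let S (k : ℕ) : RefinementStage i F r k := Nat.rec S₀ next k
  exact ⟨{
    ι := fun k => (S k).ι
    fin := fun k => (S k).fin
    c := fun k => (S k).c
    dg := fun k => (S k).dg
    bound := fun k => (S k).bound
    s := fun k => s k (S k)
    mem_degLE := fun k => hs k (S k)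
    homog := fun k => hhomog k (S k)
    o := o
    c_o := hc
    dg_o := hdg
    exact0 := fun t w hw => by
      change w ∈ degLE i S₀.c t at hw
      have := homogenize_mem_range_bigradedMap_iff (hs 0 S₀) hw
      rwa [hrange, hZ₀, homogenize_apply, hc, tsub_zero] at this
    exactS := fun k t w hw => by
      rw [← homogenize_mem_range_bigradedMap_iff (hs (k + 1) (S (k + 1))) hw, hrange, ← hker,
        LinearMap.mem_ker, bigradedMap_homogenize_eq_zero_iff (hs k (S k)) hw] }⟩

end Stage

section Regularity

variable {K σ : Type} [Field K] {i : σ} {I J : Ideal (MvPoly K σ)} {r : ℤ}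

theorem IsXHomogeneous.colon_X (hI : IsXHomogeneous i I) (hJ : ∀ p, p ∈ J ↔ X i * p ∈ I) :
    IsXHomogeneous i J := fun k p hp => by
  have := hI (k + 1) _ ((hJ p).1 hp)
  rw [← pow_one (X i), ← pow_mul, one_mul, xCoeff_X_pow_mul, if_pos (Nat.le_add_left 1 k),
    Nat.add_sub_cancel, pow_succ', mul_assoc] at this
  exact (hJ _).2 this

theorem ResBound.colon_X (hI : IsXHomogeneous i I) (hI₀ : ∀ p ∈ I, constantCoeff p = 0)
    (hJ : ∀ p, p ∈ J ↔ X i * p ∈ I) (h : ResBound K σ I r) : ResBound K σ J r := by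
  obtain ⟨M⟩ := h.nonempty_biRes hI hI₀
  have hgc : GaloisConnection Nat.pred Nat.succ := fun a b => Nat.pred_le_iff
  simpa using (M.relabel hgc rfl (δ := 0) (fun c => by simp) fun t a => by
    rw [hJ, Nat.succ_eq_add_one, pow_succ', mul_assoc]).resBound (hI.colon_X hJ)

theorem ResBound.of_colon_X (hI : IsXHomogeneous i I) (hJ₀ : ∀ p ∈ J, constantCoeff p = 0)
    (hJ : ∀ p, p ∈ J ↔ X i * p ∈ I) (hJI : ∀ p ∈ J, (xCoeff i 0 p : MvPoly K σ) ∈ I)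
    (h : ResBound K σ J r) : ResBound K σ I (r + 1) := by
  obtain ⟨M⟩ := h.nonempty_biRes (hI.colon_X hJ) hJ₀
  have hgc : GaloisConnection (fun c => if c = 0 then 0 else c + 1) Nat.pred := fun a b => by
    simp only [Nat.pred_eq_sub_one]
    split_ifs <;> omega
  refine (M.relabel hgc rfl (δ := 1) (fun c => by split_ifs <;> omega) fun t a => ?_).resBound hI
  cases t with
  | zero =>
    refine ⟨fun ha => (hJ _).2 (I.mul_mem_left _ ha), fun ha => ?_⟩
    simpa [xCoeff_coe] using hJI _ ha
  | succ t => rw [hJ, pow_succ', mul_assoc, Nat.pred_succ]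

theorem CMreg_eq_coe (h : ResBound K σ I r) (hr : ∀ s, ResBound K σ I s → r ≤ s) :
    CMreg K σ I = r := by
  have hex : ∃ r : ℤ, ResBound K σ I r ∧ ∀ s : ℤ, ResBound K σ I s → r ≤ s := ⟨r, h, hr⟩
  rw [CMreg, dif_pos hex, WithBot.coe_inj]
  exact le_antisymm (hex.choose_spec.2 r h) (hr _ hex.choose_spec.1)

-- `CMreg` takes the junk value `⊥` if there is no least bound, so the proof has to produce a least
-- bound for `I` from one for `J`.
theorem CMreg_le_add {d d' : ℤ} (hIJ : ∀ r, ResBound K σ I r → ResBound K σ J (r + d))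
    (hJI : ∀ r, ResBound K σ J r → ResBound K σ I (r + d')) :
    CMreg K σ J ≤ CMreg K σ I + d := by
  by_cases hex : ∃ r : ℤ, ResBound K σ J r ∧ ∀ s : ℤ, ResBound K σ J s → r ≤ s
  · obtain ⟨rJ, hrJ, hminJ⟩ := hex
    have hbdd (s : ℤ) (hs : ResBound K σ I s) : rJ - d ≤ s :=
      sub_le_iff_le_add.2 (hminJ _ (hIJ s hs))
    obtain ⟨rI, hrI, hminI⟩ := Int.exists_least_of_bdd ⟨rJ - d, hbdd⟩ ⟨_, hJI _ hrJ⟩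
    rw [CMreg_eq_coe hrJ hminJ, CMreg_eq_coe hrI hminI, ← WithBot.coe_add]
    exact WithBot.coe_le_coe.2 (hminJ _ (hIJ rI hrI))
  · rw [CMreg, dif_neg hex]
    exact bot_le

theorem CMreg_colon_X (hI : IsXHomogeneous i I) (hI₀ : ∀ p ∈ I, constantCoeff p = 0)
    (hJ : ∀ p, p ∈ J ↔ X i * p ∈ I) (hJI : ∀ p ∈ J, (xCoeff i 0 p : MvPoly K σ) ∈ I) :
    CMreg K σ J ≤ CMreg K σ I ∧ CMreg K σ I ≤ CMreg K σ J + 1 := by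
  have hJ₀ (p) (hp : p ∈ J) : constantCoeff p = 0 := by
    classical
    simpa [constantCoeff_eq, coeff_xCoeff] using hI₀ _ (hJI p hp)
  have hIJ (r) (h : ResBound K σ I r) : ResBound K σ J (r + 0) := by
    rw [add_zero]
    exact h.colon_X hI hI₀ hJ
  have hJI' (r) (h : ResBound K σ J r) : ResBound K σ I (r + 1) := h.of_colon_X hI hJ₀ hJ hJI
  exact ⟨by simpa using CMreg_le_add hIJ hJI', by simpa using CMreg_le_add hJI' hIJ⟩

end Regularity

section Main

variable {K σ : Type} [Field K]

attribute [local instance] MvPolynomial.gradedAlgebra weightedGradedAlgebra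

theorem constantCoeff_eq_zero_of_mem {I : Ideal (MvPoly K σ)}
    (hI : I.IsHomogeneous (homogeneousSubmodule σ K)) (htop : I ≠ ⊤) {p : MvPoly K σ}
    (hp : p ∈ I) : constantCoeff p = 0 := by
  have hC : C (constantCoeff p) ∈ I := by
    rw [constantCoeff_eq, ← homogeneousComponent_zero]
    exact homogeneousComponent_mem_of_mem hI hp 0
  by_contra hne
  exact htop (I.eq_top_of_isUnit_mem hC ((isUnit_iff_ne_zero.2 hne).map C))

theorem xCoeff_zero_mem_of_sup_eq_sup {i : σ} {I J : Ideal (MvPoly K σ)} (hI : IsXHomogeneous i I)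
    (hsum : I + Ideal.span {(X i : MvPoly K σ)} = J + Ideal.span {(X i : MvPoly K σ)})
    {p : MvPoly K σ} (hp : p ∈ J) : (xCoeff i 0 p : MvPoly K σ) ∈ I := by
  have hpI : p ∈ I ⊔ Ideal.span {X i} := hsum.ge (Ideal.mem_sup_left hp)
  obtain ⟨q, hq, _, ha, rfl⟩ := Submodule.mem_sup.1 hpI
  obtain ⟨a, rfl⟩ := Ideal.mem_span_singleton.1 ha
  have hXa : xCoeff i 0 (X i * a) = 0 := by simpa using xCoeff_X_pow_mul (i := i) 0 1 a
  rw [map_add, hXa, add_zero]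
  simpa using hI 0 q hq

theorem IsMonomialIdeal.isHomogeneous {n : ℕ} {I : Ideal (MvPoly K (Fin n))}
    (hI : IsMonomialIdeal K I) (w : Fin n → ℕ) :
    I.IsHomogeneous (weightedHomogeneousSubmodule K w) := by
  obtain ⟨S, rfl⟩ := hI
  refine Ideal.homogeneous_span _ _ ?_
  rintro _ ⟨d, -, rfl⟩
  exact ⟨_, isWeightedHomogeneous_monomial w d 1 rfl⟩

theorem stmt9_general (K σ : Type) [Field K] [DecidableEq σ] (I J : Ideal (MvPoly K σ)) (i : σ)
    (hI : I.IsHomogeneous (homogeneousSubmodule σ K))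
    (hIX : I.IsHomogeneous (weightedHomogeneousSubmodule K (Pi.single i 1 : σ → ℕ)))
    (hcolon : I.colon (Ideal.span {(X i : MvPoly K σ)}) = J)
    (hsum : I + Ideal.span {(X i : MvPoly K σ)} = J + Ideal.span {(X i : MvPoly K σ)}) :
    (CMreg K σ J ≤ CMreg K σ I ∧ CMreg K σ I ≤ CMreg K σ J + 1) ∧
      depthQ K σ I = depthQ K σ J := by
  have hX : IsXHomogeneous i I := isXHomogeneous_of_isHomogeneous hIX
  have hJ (p) : p ∈ J ↔ X i * p ∈ I := by
    rw [← hcolon, mul_comm]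
    exact Ideal.mem_colon_span_singleton
  have hJI (p) (hp : p ∈ J) : (xCoeff i 0 p : MvPoly K σ) ∈ I :=
    xCoeff_zero_mem_of_sup_eq_sup hX hsum hp
  refine ⟨?_, depthQ_eq_of_mem_iff_X_mul_mem hJ hJI⟩
  obtain rfl | htop := eq_or_ne I ⊤
  · obtain rfl : J = ⊤ := (Ideal.eq_top_iff_one J).2 ((hJ 1).2 trivial)
    exact ⟨le_rfl, le_add_of_nonneg_right zero_le_one⟩
  · exact CMreg_colon_X hX (fun p => constantCoeff_eq_zero_of_mem hI htop) hJ hJI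

end Main

end

/-- if `(I : x_i) = J` and `(I, x_i) = (J, x_i)` for monomial ideals
`I, J`, then `reg` and `depth` of `R/I` are sandwiched by those of `R/J`. -/
theorem stmt9 (K : Type) [Field K] (n : ℕ) (I J : Ideal (MvPoly K (Fin n)))
    (hI : IsMonomialIdeal K I) (hJ : IsMonomialIdeal K J) (i : Fin n)
    (hcolon : I.colon (Ideal.span {(MvPolynomial.X i : MvPoly K (Fin n))}) = J)
    (hsum : I + Ideal.span {(MvPolynomial.X i : MvPoly K (Fin n))} =
      J + Ideal.span {(MvPolynomial.X i : MvPoly K (Fin n))}) :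
    (CMreg K (Fin n) J ≤ CMreg K (Fin n) I ∧
      CMreg K (Fin n) I ≤ CMreg K (Fin n) J + 1) ∧
    (depthQ K (Fin n) J - 1 ≤ depthQ K (Fin n) I ∧
      depthQ K (Fin n) I ≤ depthQ K (Fin n) J) := by
  obtain ⟨hreg, hdepth⟩ :=
    stmt9_general K (Fin n) I J i (hI.isHomogeneous 1) (hI.isHomogeneous _) hcolon hsum
  exact ⟨hreg, hdepth ▸ tsub_le_self, hdepth.le⟩
end
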